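/- Let q : [1, ∞) → ℂ be a continuous function with q(x) → 0 as x → +∞. Then there exists a completely multiplicative function χ : ℕ → {1, e^{2πi/3}, e^{-2πi/3}} such that the function s ↦ ∫_1^∞ q(x) x^{-s} dx − ∑_p χ(p) p^{-s} log p (the sum ranging over all primes p), initially defined and analytic in the half-plane Re s > 1, extends analytically to the half-plane Re s > 21/40. -/

import Mathlib

/-!
The half-line `[1, ∞)` is cut into blocks `m < log x ≤ m + 1`. On each block the measure `q(x) dx`
is first imitated by complex weights `w p` with `‖w p‖ ≤ 1/2` on the primes of that block, and the
weights are then rounded to cube roots of unity.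

*Matching moments.* In the variable `t = log x - m`, the weights are chosen such that
`∑ w p log p · t ^ j` over the block equals the `j`-th moment of `q(x) dx` for all `j ≤ m`. By
Hahn–Banach (`exists_weights`) such weights exist, as `q` is small, once the primes of the block
sample polynomials `P` of degree `≤ m`, that is
`∑ log p · |P (log p - m)| ≥ (e^m / 8) ∫ |P|` (`exists_sampling`). By Markov's inequality `P` is
nearly constant, relative to `∫ |P|`, on cells of length about `m ^ (-4)`, so this only needs the right order of magnitude
for the number of primes in intervals of length `x / (log x) ^ 5` (`eventually_theta_sub_ge`). That
in turn follows from a prime number theorem which saves eleven logarithms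
(`exists_smoothed_pnt`). Its source is a zero-free region of width `|t| ^ (-κ)` with arbitrarily
small `κ > 0` (`exists_zero_free`): the series `(s - 1) ζ(s) = 1 + ∑ zetaTerm n s` bounds `ζ` by
`|t| ^ (2 ε)` on `Re s ≥ 1 - ε`, and the `3-4-1` inequality converts this into a lower bound.

*Entire part.* Taylor's formula for `e^{-st}` to order `m` shows that the difference of integral and
weighted prime sum over the block is, for `‖s‖ ≤ R`, at most a constant times
`e^{m (R + 1)} K ^ (-m)` for every fixed `K ≥ 1` (`norm_blockDiff_le`). Summing over the blocks
yields an entire function (`differentiable_tsum_blockDiff`).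

*Rounding.* The disc of radius `1/2` is inscribed in the triangle of cube roots of unity, so the
weights can be rounded to cube roots `v p` one after the other, each time moving against the
accumulated error. The partial sums of `(v p - w p) log p` are then `O(n ^ (13/25))`, and the
corresponding Dirichlet series extends to `Re s > 13/25` (`exists_rounded_extension`). Since
`13/25 < 21/40`, the completely multiplicative function with `χ p = v p` has the required property.
-/

open Complex Filter Set MeasureTheory

/-- A completely multiplicative function: `χ 1 = 1` and `χ (m*n) = χ m * χ n`. -/
def CompletelyMultiplicative (χ : ℕ → ℂ) : Prop :=
  χ 1 = 1 ∧ ∀ m n : ℕ, χ (m * n) = χ m * χ n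

namespace CubicExt

/-! ### Growth of `(s - 1) ζ(s)` near the line `Re s = 1` -/

/-- The terms of the telescoped expansion `(s - 1) ζ(s) = 1 + ∑ zetaTerm n s`; in closed form
`zetaTerm n s = (s - 1) * (N ^ (-s) - ∫ x in N..N+1, x ^ (-s))` with `N = n + 1`. -/
noncomputable def zetaTerm (n : ℕ) (s : ℂ) : ℂ :=
  (s - 1) * ((n : ℂ) + 1) ^ (-s) + ((n : ℂ) + 2) ^ (1 - s) - ((n : ℂ) + 1) ^ (1 - s)

lemma norm_cpow_sub_cpow_le {N x : ℝ} (hN : 1 ≤ N) (hx : x ∈ Icc N (N + 1)) {s : ℂ}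
    (hs : 0 ≤ s.re) :
    ‖(N : ℂ) ^ (-s) - (x : ℂ) ^ (-s)‖ ≤ ‖s‖ * N ^ (-s.re - 1) := by
  have hN0 : 0 < N := by linarith
  have h1 : ∀ y ∈ Icc N (N + 1), HasDerivWithinAt (fun y : ℝ => (y : ℂ) ^ (-s))
      (-s * (y : ℂ) ^ (-s - 1)) (Icc N (N + 1)) y := by
    intro y hy
    have hy0 : (0 : ℝ) < y := by linarith [hy.1]
    have := (hasDerivAt_id (y : ℂ)).cpow_const (c := -s) (Or.inl (by simpa using hy0))
    have h2 := this.comp_ofReal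
    simpa using h2.hasDerivWithinAt
  have h2 : ∀ y ∈ Icc N (N + 1), ‖-s * (y : ℂ) ^ (-s - 1)‖ ≤ ‖s‖ * N ^ (-s.re - 1) := by
    intro y hy
    have hy0 : (0 : ℝ) < y := by linarith [hy.1]
    rw [norm_mul, norm_neg, Complex.norm_cpow_eq_rpow_re_of_pos hy0]
    simp only [sub_re, neg_re, one_re]
    gcongr ‖s‖ * ?_
    exact Real.rpow_le_rpow_of_nonpos hN0 hy.1 (by linarith)
  have := Convex.norm_image_sub_le_of_norm_hasDerivWithin_le h1 h2 (convex_Icc _ _) hx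
    (left_mem_Icc.2 (by linarith))
  refine this.trans ?_
  have h3 : ‖N - x‖ ≤ 1 := by
    rw [Real.norm_eq_abs, abs_le]; constructor <;> linarith [hx.1, hx.2]
  have h4 : 0 ≤ ‖s‖ * N ^ (-s.re - 1) := by positivity
  nlinarith

lemma norm_cpow_sub_cpow_le' {N x : ℝ} (hN : 1 ≤ N) (hx : x ∈ Icc N (N + 1)) {s : ℂ}
    (hs : 0 ≤ s.re) : ‖(N : ℂ) ^ (-s) - (x : ℂ) ^ (-s)‖ ≤ 2 * N ^ (-s.re) := by
  have hN0 : 0 < N := by linarith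
  have hx0 : 0 < x := by linarith [hx.1]
  refine (norm_sub_le _ _).trans ?_
  rw [Complex.norm_cpow_eq_rpow_re_of_pos hN0, Complex.norm_cpow_eq_rpow_re_of_pos hx0]
  have := Real.rpow_le_rpow_of_nonpos hN0 hx.1 (show (-s).re ≤ 0 by simpa using hs)
  simp only [neg_re] at *
  linarith

/-- Interpolation, with exponent `α`, between the mean value bound and the trivial bound. -/
lemma norm_cpow_sub_cpow_le_interp {N x : ℝ} (hN : 1 ≤ N) (hx : x ∈ Icc N (N + 1)) {s : ℂ}
    (hs : 0 < s.re) {α : ℝ} (hα0 : 0 ≤ α) (hα1 : α ≤ 1) :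
    ‖(N : ℂ) ^ (-s) - (x : ℂ) ^ (-s)‖ ≤ 2 * ‖s‖ ^ α * N ^ (-(s.re + α)) := by
  have hN0 : 0 < N := by linarith
  have hs0 : 0 < ‖s‖ := by
    rw [norm_pos_iff]; rintro rfl; simp at hs
  have e : 2 * ‖s‖ ^ α * N ^ (-(s.re + α)) = 2 * (‖s‖ / N) ^ α * N ^ (-s.re) := by
    rw [Real.div_rpow hs0.le hN0.le, neg_add, Real.rpow_add hN0, Real.rpow_neg hN0.le α]
    ring
  rw [e]
  have hp : 0 < N ^ (-s.re) := by positivity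
  rcases le_total 1 (‖s‖ / N) with h | h
  · refine (norm_cpow_sub_cpow_le' hN hx hs.le).trans ?_
    have : 1 ≤ (‖s‖ / N) ^ α := Real.one_le_rpow h hα0
    nlinarith
  · refine (norm_cpow_sub_cpow_le hN hx hs.le).trans ?_
    have h1 : ‖s‖ / N ≤ (‖s‖ / N) ^ α := by
      have := Real.rpow_le_rpow_of_exponent_ge (by positivity : 0 < ‖s‖ / N) h hα1
      simpa using this
    have h2 : ‖s‖ * N ^ (-s.re - 1) = ‖s‖ / N * N ^ (-s.re) := by
      rw [Real.rpow_sub hN0, Real.rpow_one]; ring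
    rw [h2]
    have : 0 ≤ ‖s‖ / N := by positivity
    nlinarith

lemma norm_zetaTerm_le (n : ℕ) {s : ℂ} (hs : 0 < s.re) {α : ℝ} (hα0 : 0 ≤ α) (hα1 : α ≤ 1) :
    ‖zetaTerm n s‖ ≤ 2 * ‖s - 1‖ * ‖s‖ ^ α * ((n : ℝ) + 1) ^ (-(s.re + α)) := by
  rcases eq_or_ne s 1 with rfl | h1
  · simp [zetaTerm]
  set N : ℝ := (n : ℝ) + 1 with hNdef
  have hN : 1 ≤ N := by simp [hNdef]
  have hfint : ∫ x in N..(N + 1), (x : ℂ) ^ (-s)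
      = (((N + 1 : ℝ) : ℂ) ^ (-s + 1) - (N : ℂ) ^ (-s + 1)) / (-s + 1) := by
    apply integral_cpow
    right
    refine ⟨by simpa [neg_eq_iff_eq_neg] using h1, ?_⟩
    rw [uIcc_of_le (by linarith)]
    simp only [mem_Icc, not_and, not_le]
    intro; linarith
  have hne : (-s + 1) ≠ 0 := by
    intro h; apply h1; linear_combination -h
  have hcont : ContinuousOn (fun x : ℝ => (x : ℂ) ^ (-s)) (uIcc N (N + 1)) := by
    intro x hx
    rw [uIcc_of_le (by linarith)] at hx
    have : (0 : ℝ) < x := by linarith [hx.1]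
    apply ContinuousAt.continuousWithinAt
    exact (continuousAt_cpow_const (Or.inl (by simpa using this))).comp
      Complex.continuous_ofReal.continuousAt
  have key : zetaTerm n s = (s - 1) * ∫ x in N..(N + 1), ((N : ℂ) ^ (-s) - (x : ℂ) ^ (-s)) := by
    rw [intervalIntegral.integral_sub (by simp) hcont.intervalIntegrable, hfint]
    simp only [intervalIntegral.integral_const, add_sub_cancel_left, one_smul, zetaTerm]
    have e1 : ((N : ℝ) : ℂ) = (n : ℂ) + 1 := by simp [hNdef]
    have e2 : ((N + 1 : ℝ) : ℂ) = (n : ℂ) + 2 := by push_cast [hNdef]; ring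
    rw [e1, e2, show (1 - s) = -s + 1 by ring]
    field_simp
    ring
  rw [key, norm_mul]
  have := intervalIntegral.norm_integral_le_of_norm_le_const (a := N) (b := N + 1)
    (f := fun x : ℝ => ((N : ℂ) ^ (-s) - (x : ℂ) ^ (-s)))
    (C := 2 * ‖s‖ ^ α * N ^ (-(s.re + α))) (by
      intro x hx
      rw [uIoc_of_le (by linarith)] at hx
      exact norm_cpow_sub_cpow_le_interp hN (Ioc_subset_Icc_self hx) hs hα0 hα1)
  simp only [add_sub_cancel_left, abs_one, mul_one] at this
  calc _ ≤ ‖s - 1‖ * (2 * ‖s‖ ^ α * N ^ (-(s.re + α))) := by gcongr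
    _ = _ := by ring

lemma hasSum_zetaTerm_of_one_lt {s : ℂ} (hs : 1 < s.re) :
    HasSum (fun n => zetaTerm n s) (riemannZeta₁ s - 1) := by
  have hne : s ≠ 1 := by rintro rfl; simp at hs
  have h1 : HasSum (fun n : ℕ => (s - 1) * ((n : ℂ) + 1) ^ (-s)) ((s - 1) * riemannZeta s) := by
    apply HasSum.mul_left
    rw [zeta_eq_tsum_one_div_nat_add_one_cpow hs]
    have hsum : Summable (fun n : ℕ => 1 / ((n : ℂ) + 1) ^ s) := by
      have := (summable_nat_add_iff 1).2 (Complex.summable_one_div_nat_cpow.2 hs)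
      simpa using this
    refine hsum.hasSum.congr_fun ?_ |> fun h => h
    intro n
    rw [cpow_neg, one_div]
  have h2 : Tendsto (fun n : ℕ => ((n : ℂ) + 1) ^ (1 - s)) atTop (nhds 0) := by
    rw [tendsto_zero_iff_norm_tendsto_zero]
    have : Tendsto (fun n : ℕ => ((n : ℝ) + 1) ^ (-(s.re - 1))) atTop (nhds 0) :=
      (tendsto_rpow_neg_atTop (by linarith)).comp
        (tendsto_atTop_add_const_right _ _ tendsto_natCast_atTop_atTop)
    refine this.congr ?_
    intro n
    have : ((n : ℂ) + 1) = (((n : ℝ) + 1 : ℝ) : ℂ) := by push_cast; rfl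
    rw [this, Complex.norm_cpow_eq_rpow_re_of_pos (by positivity)]
    simp
  have hsumm : Summable (fun n => zetaTerm n s) := by
    have hb : Summable (fun n : ℕ => 2 * ‖s - 1‖ * ‖s‖ ^ (0:ℝ) * ((n : ℝ) + 1) ^ (-(s.re + 0))) := by
      apply Summable.mul_left
      have := (summable_nat_add_iff 1).2 (Real.summable_nat_rpow.2 (by linarith : -(s.re + 0) < -1))
      simpa using this
    exact Summable.of_norm_bounded hb fun n => norm_zetaTerm_le n (by linarith) le_rfl zero_le_one
  have h3 : HasSum (fun n : ℕ => ((n : ℂ) + 2) ^ (1 - s) - ((n : ℂ) + 1) ^ (1 - s)) (-1) := by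
    have hs3 : Summable (fun n : ℕ => ((n : ℂ) + 2) ^ (1 - s) - ((n : ℂ) + 1) ^ (1 - s)) := by
      have := hsumm.sub h1.summable
      refine this.congr fun n => ?_
      simp only [zetaTerm]; ring
    rw [hs3.hasSum_iff_tendsto_nat]
    have e : ∀ N : ℕ, ∑ n ∈ Finset.range N, (((n : ℂ) + 2) ^ (1 - s) - ((n : ℂ) + 1) ^ (1 - s))
        = ((N : ℂ) + 1) ^ (1 - s) - 1 := by
      intro N
      have := Finset.sum_range_sub (fun n : ℕ => ((n : ℂ) + 1) ^ (1 - s)) N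
      simp only [Nat.cast_add, Nat.cast_one, Nat.cast_zero, zero_add, one_cpow] at this
      rw [← this]
      refine Finset.sum_congr rfl fun n _ => ?_
      ring_nf
    simp_rw [e]
    simpa using h2.sub_const 1
  have h4 := h1.add h3
  have e : (s - 1) * riemannZeta s + -1 = riemannZeta₁ s - 1 := by
    rw [riemannZeta_eq_inv_sub_mul hne, ← mul_assoc, mul_inv_cancel₀ (sub_ne_zero.2 hne)]
    ring
  rw [e] at h4
  refine h4.congr_fun ?_ |> fun h => h
  intro n
  simp only [zetaTerm]; ring

lemma differentiable_zetaTerm (n : ℕ) : Differentiable ℂ (zetaTerm n) := by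
  have h1 : ((n : ℂ) + 1) ≠ 0 := by exact_mod_cast Nat.succ_ne_zero n
  have h2 : ((n : ℂ) + 2) ≠ 0 := by exact_mod_cast (Nat.succ_ne_zero (n + 1))
  unfold zetaTerm
  intro s
  have a1 : DifferentiableAt ℂ (fun s : ℂ => ((n : ℂ) + 1) ^ (-s)) s :=
    DifferentiableAt.const_cpow (by fun_prop) (Or.inl h1)
  have a2 : DifferentiableAt ℂ (fun s : ℂ => ((n : ℂ) + 2) ^ (1 - s)) s :=
    DifferentiableAt.const_cpow (by fun_prop) (Or.inl h2)
  have a3 : DifferentiableAt ℂ (fun s : ℂ => ((n : ℂ) + 1) ^ (1 - s)) s :=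
    DifferentiableAt.const_cpow (by fun_prop) (Or.inl h1)
  exact ((((differentiableAt_id.sub_const 1).mul a1).add a2).sub a3)

lemma differentiableOn_tsum_zetaTerm :
    DifferentiableOn ℂ (fun s => ∑' n, zetaTerm n s) {s : ℂ | 0 < s.re} := by
  intro s₀ hs₀
  have hs₀ : 0 < s₀.re := hs₀
  set U : Set ℂ := {s : ℂ | s₀.re / 2 < s.re} ∩ Metric.ball 0 (‖s₀‖ + 1) with hU
  have hUo : IsOpen U := (isOpen_lt continuous_const Complex.continuous_re).inter Metric.isOpen_ball
  have hmem : s₀ ∈ U := ⟨by simp only [mem_ofPred_eq]; linarith, by simp⟩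
  set R := ‖s₀‖ + 1
  have hb : Summable (fun n : ℕ => 2 * (R + 1) * R * ((n : ℝ) + 1) ^ (-(s₀.re / 2 + 1))) := by
    apply Summable.mul_left
    have := (summable_nat_add_iff 1).2
      (Real.summable_nat_rpow.2 (by linarith : -(s₀.re / 2 + 1) < -1))
    simpa using this
  have := differentiableOn_tsum_of_summable_norm (F := zetaTerm) hb
    (fun i => (differentiable_zetaTerm i).differentiableOn) hUo (by
      intro n s hs
      have hs1 : s₀.re / 2 < s.re := hs.1
      have hs2 : ‖s‖ ≤ R := by have := hs.2; simp at this; exact this.le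
      refine (norm_zetaTerm_le n (by linarith) zero_le_one le_rfl).trans ?_
      rw [Real.rpow_one]
      have h3 : ‖s - 1‖ ≤ R + 1 := (norm_sub_le _ _).trans (by simpa using hs2)
      gcongr
      linarith)
  exact (this.differentiableAt (hUo.mem_nhds hmem)).differentiableWithinAt

lemma riemannZeta₁_eq_tsum {s : ℂ} (hs : 0 < s.re) :
    riemannZeta₁ s = 1 + ∑' n, zetaTerm n s := by
  have hop : IsOpen {s : ℂ | 0 < s.re} := isOpen_lt continuous_const Complex.continuous_re
  have h1 : AnalyticOnNhd ℂ riemannZeta₁ {s : ℂ | 0 < s.re} :=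
    (differentiable_riemannZeta₁.differentiableOn).analyticOnNhd hop
  have h2 : AnalyticOnNhd ℂ (fun s => 1 + ∑' n, zetaTerm n s) {s : ℂ | 0 < s.re} :=
    ((differentiableOn_const 1).add differentiableOn_tsum_zetaTerm).analyticOnNhd hop
  refine h1.eqOn_of_preconnected_of_eventuallyEq h2
    (convex_halfSpace_re_gt 0).isPreconnected (z₀ := 2) (by simp) ?_ hs
  have : {s : ℂ | 1 < s.re} ∈ nhds (2 : ℂ) :=
    (isOpen_lt continuous_const Complex.continuous_re).mem_nhds (by simp)
  filter_upwards [this] with z hz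
  rw [(hasSum_zetaTerm_of_one_lt hz).tsum_eq]; ring

/-- Growth of `(s - 1) ζ(s)` slightly to the left of the line `Re s = 1`: the exponent of `‖s‖` in
excess of the linear factor can be made arbitrarily small. -/
lemma exists_norm_riemannZeta₁_sub_one_le {ε : ℝ} (hε : 0 < ε) (hε' : ε ≤ 1 / 2) :
    ∃ C : ℝ, 0 < C ∧ ∀ s : ℂ, 1 - ε ≤ s.re →
      ‖riemannZeta₁ s - 1‖ ≤ C * ‖s - 1‖ * ‖s‖ ^ (2 * ε) := by
  have hb : Summable (fun n : ℕ => ((n : ℝ) + 1) ^ (-(1 + ε))) := by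
    have := (summable_nat_add_iff 1).2 (Real.summable_nat_rpow.2 (by linarith : -(1 + ε) < -1))
    simpa using this
  have hpos : 0 ≤ ∑' n : ℕ, ((n : ℝ) + 1) ^ (-(1 + ε)) := tsum_nonneg fun n => by positivity
  refine ⟨2 * (∑' n : ℕ, ((n : ℝ) + 1) ^ (-(1 + ε)) + 1), by positivity, fun s hs => ?_⟩
  rw [riemannZeta₁_eq_tsum (by linarith), add_sub_cancel_left]
  have hle : ∀ n : ℕ, ‖zetaTerm n s‖ ≤
      2 * ‖s - 1‖ * ‖s‖ ^ (2 * ε) * ((n : ℝ) + 1) ^ (-(1 + ε)) := by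
    intro n
    refine (norm_zetaTerm_le n (by linarith) (by linarith) (by linarith : 2 * ε ≤ 1)).trans ?_
    exact mul_le_mul_of_nonneg_left
      (Real.rpow_le_rpow_of_exponent_le (by simp) (by linarith)) (by positivity)
  refine (tsum_of_norm_bounded (hb.mul_left _).hasSum hle).trans ?_
  rw [tsum_mul_left]
  have : 0 ≤ ‖s - 1‖ * ‖s‖ ^ (2 * ε) := by positivity
  nlinarith

/-! ### Zero-free region and logarithmic derivative -/

lemma norm_riemannZeta_product_ge_one {a : ℝ} (ha : 0 < a) (t : ℝ) :
    1 ≤ ‖riemannZeta (1 + a)‖ ^ 3 * ‖riemannZeta (1 + a + I * t)‖ ^ 4 *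
      ‖riemannZeta (1 + a + 2 * I * t)‖ := by
  have h := DirichletCharacter.norm_LSeries_product_ge_one (1 : DirichletCharacter ℂ 1) ha t
  have e : LSeries (fun n : ℕ => (1 : DirichletCharacter ℂ 1) (n : ZMod 1)) = LSeries 1 :=
    DirichletCharacter.LSeries_modOne_eq
  rw [one_pow, e, LSeries_one_eq_riemannZeta (by simpa using ha),
    LSeries_one_eq_riemannZeta (by simpa using ha),
    LSeries_one_eq_riemannZeta (by simpa using ha)] at h
  simpa [norm_mul, norm_pow] using h

lemma norm_riemannZeta_eq {s : ℂ} (hs : s ≠ 1) :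
    ‖riemannZeta s‖ = ‖riemannZeta₁ s‖ / ‖s - 1‖ := by
  rw [riemannZeta_eq_inv_sub_mul hs, norm_mul, norm_inv]; ring

lemma riemannZeta₁_ne_zero {s : ℂ} (hs : 1 ≤ s.re) : riemannZeta₁ s ≠ 0 := by
  rcases eq_or_ne s 1 with rfl | h
  · simp
  · have := riemannZeta_ne_zero_of_one_le_re hs
    rw [riemannZeta_eq_inv_sub_mul h] at this
    exact right_ne_zero_of_mul this

lemma exists_norm_riemannZeta₁_le {ε : ℝ} (hε : 0 < ε) (hε' : ε ≤ 1 / 2) :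
    ∃ C : ℝ, 0 < C ∧ ∀ s : ℂ, 1 - ε ≤ s.re → s.re ≤ 3 →
      ‖riemannZeta₁ s‖ ≤ C * (1 + |s.im|) ^ (1 + 2 * ε) := by
  obtain ⟨C, hC, h⟩ := exists_norm_riemannZeta₁_sub_one_le hε hε'
  refine ⟨1 + C * 6, by positivity, fun s h1 h2 => ?_⟩
  set τ := 1 + |s.im| with hτ
  have hτ1 : 1 ≤ τ := by rw [hτ]; linarith [abs_nonneg s.im]
  have n1 : ‖s - 1‖ ≤ 2 * τ := by
    refine (Complex.norm_le_abs_re_add_abs_im _).trans ?_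
    have : |s.re - 1| ≤ 2 := by rw [abs_le]; constructor <;> linarith
    simp only [sub_re, one_re, sub_im, one_im, sub_zero]
    linarith [abs_nonneg s.im]
  have n2 : ‖s‖ ≤ 3 * τ := by
    refine (Complex.norm_le_abs_re_add_abs_im _).trans ?_
    have : |s.re| ≤ 3 := by rw [abs_le]; constructor <;> linarith
    linarith [abs_nonneg s.im]
  have n3 : ‖s‖ ^ (2 * ε) ≤ 3 * τ ^ (2 * ε) := by
    calc ‖s‖ ^ (2 * ε) ≤ (3 * τ) ^ (2 * ε) := by gcongr
      _ = 3 ^ (2 * ε) * τ ^ (2 * ε) := Real.mul_rpow (by norm_num) (by linarith)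
      _ ≤ 3 ^ (1 : ℝ) * τ ^ (2 * ε) := by
        gcongr
        · norm_num
        · linarith
      _ = _ := by rw [Real.rpow_one]
  have n4 : 1 ≤ τ ^ (1 + 2 * ε) := Real.one_le_rpow hτ1 (by linarith)
  have n5 : τ ^ (1 + 2 * ε) = τ * τ ^ (2 * ε) := by
    rw [Real.rpow_add (by linarith), Real.rpow_one]
  have n6 : ‖riemannZeta₁ s‖ ≤ 1 + ‖riemannZeta₁ s - 1‖ := by
    have := norm_add_le (1 : ℂ) (riemannZeta₁ s - 1)
    simpa using this
  calc ‖riemannZeta₁ s‖ ≤ 1 + C * ‖s - 1‖ * ‖s‖ ^ (2 * ε) := n6.trans (by linarith [h s h1])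
    _ ≤ 1 + C * (2 * τ) * (3 * τ ^ (2 * ε)) := by gcongr
    _ = 1 + C * 6 * τ ^ (1 + 2 * ε) := by rw [n5]; ring
    _ ≤ (1 + C * 6) * τ ^ (1 + 2 * ε) := by nlinarith

lemma exists_norm_deriv_riemannZeta₁_le {ε : ℝ} (hε : 0 < ε) (hε' : ε ≤ 1 / 2) :
    ∃ C : ℝ, 0 < C ∧ ∀ s : ℂ, 1 - ε / 2 ≤ s.re → s.re ≤ 2 →
      ‖deriv riemannZeta₁ s‖ ≤ C * (1 + |s.im|) ^ (1 + 2 * ε) := by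
  obtain ⟨C, hC, h⟩ := exists_norm_riemannZeta₁_le hε hε'
  refine ⟨C * 2 ^ (1 + 2 * ε) / (ε / 2), by positivity, fun s h1 h2 => ?_⟩
  have hτ1 : 1 ≤ 1 + |s.im| := by linarith [abs_nonneg s.im]
  have := Complex.norm_deriv_le_of_forall_mem_sphere_norm_le (f := riemannZeta₁) (c := s)
    (R := ε / 2) (C := C * (2 * (1 + |s.im|)) ^ (1 + 2 * ε)) (by positivity)
    (differentiable_riemannZeta₁.diffContOnCl) (by
      intro z hz
      have hz' : ‖z - s‖ = ε / 2 := by simpa [dist_eq_norm] using hz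
      have a1 := (Complex.abs_re_le_norm (z - s)).trans hz'.le
      have a2 := (Complex.abs_im_le_norm (z - s)).trans hz'.le
      rw [sub_re, abs_le] at a1
      rw [sub_im] at a2
      have a3 := abs_sub_abs_le_abs_sub z.im s.im
      refine (h z (by linarith) (by linarith)).trans ?_
      gcongr
      linarith)
  rw [Real.mul_rpow (by norm_num) (by linarith)] at this
  calc _ ≤ _ := this
    _ = _ := by ring

/-- The `3-4-1` inequality in quantitative form, a lower bound for `(s - 1) ζ(s)` to the right of
the line `Re s = 1`. -/
lemma exists_le_norm_riemannZeta₁_pow {ε : ℝ} (hε : 0 < ε) (hε' : ε ≤ 1 / 2) :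
    ∃ c : ℝ, 0 < c ∧ ∀ s : ℂ, 1 < s.re → s.re ≤ 2 →
      c * (s.re - 1) ^ 3 * (1 + |s.im|) ^ (4 - 2 * ε) ≤ ‖riemannZeta₁ s‖ ^ 4 := by
  -- a positive lower bound on the compact box `1 ≤ Re s ≤ 2`, `|Im s| ≤ 1`
  have hK : IsCompact (Icc (1 : ℝ) 2 ×ℂ Icc (-1 : ℝ) 1) := isCompact_Icc.reProdIm isCompact_Icc
  obtain ⟨C, hC, h⟩ := exists_norm_riemannZeta₁_le hε hε'
  obtain ⟨z₀, hz₀, hmin⟩ := hK.exists_isMinOn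
    (⟨1, by simp [Complex.mem_reProdIm]⟩ : (Icc (1 : ℝ) 2 ×ℂ Icc (-1 : ℝ) 1).Nonempty)
    (differentiable_riemannZeta₁.continuous.norm.continuousOn)
  set y := ‖riemannZeta₁ z₀‖ with hy
  have hy0 : 0 < y := norm_pos_iff.2 (riemannZeta₁_ne_zero (mem_reProdIm.1 hz₀).1.1)
  refine ⟨min (y ^ 4 / 16) (1 / (256 * C ^ 4)), by positivity, fun s h1 h2 => ?_⟩
  set c := min (y ^ 4 / 16) (1 / (256 * C ^ 4)) with hc
  have hc0 : 0 < c := by positivity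
  set a := s.re - 1 with ha
  set t := s.im with ht
  set τ := 1 + |t| with hτ
  have hτ1 : 1 ≤ τ := by rw [hτ]; linarith [abs_nonneg t]
  have ha0 : 0 < a := by rw [ha]; linarith
  have ha1 : a ≤ 1 := by rw [ha]; linarith
  rcases le_total |t| 1 with htl | htl
  · have hys : y ≤ ‖riemannZeta₁ s‖ :=
      hmin (show s ∈ _ from mem_reProdIm.2 ⟨⟨h1.le, h2⟩, abs_le.1 htl⟩)
    have k1 : τ ^ (4 - 2 * ε) ≤ 16 := by
      calc τ ^ (4 - 2 * ε) ≤ τ ^ (4 : ℝ) := Real.rpow_le_rpow_of_exponent_le hτ1 (by linarith)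
        _ = τ ^ 4 := by norm_cast
        _ ≤ 2 ^ 4 := by gcongr; linarith
        _ = 16 := by norm_num
    have k2 : a ^ 3 ≤ 1 := pow_le_one₀ ha0.le ha1
    calc c * a ^ 3 * τ ^ (4 - 2 * ε) ≤ (y ^ 4 / 16) * 1 * 16 := by
          gcongr
          exact min_le_left _ _
      _ = y ^ 4 := by ring
      _ ≤ _ := by gcongr
  · have hs : s = 1 + a + I * t := by
      apply Complex.ext <;> simp [ha, ht]
    have ht0 : t ≠ 0 := by intro h; rw [h] at htl; norm_num at htl
    have p := norm_riemannZeta_product_ge_one ha0 t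
    rw [← hs] at p
    have q1 : ‖riemannZeta (1 + a)‖ ≤ C / a := by
      rw [norm_riemannZeta_eq (by simpa using ha0.ne')]
      have := h (1 + a) (by simp; linarith) (by simp; linarith)
      simp only [add_im, one_im, ofReal_im, add_zero, abs_zero, Real.one_rpow, mul_one] at this
      simp only [add_sub_cancel_left, norm_real, Real.norm_eq_abs, abs_of_pos ha0]
      gcongr
    have q2 : ‖riemannZeta (1 + a + 2 * I * t)‖ ≤ 4 * C * τ ^ (2 * ε) := by
      have hne : (1 + a + 2 * I * t : ℂ) ≠ 1 := by
        intro hh; have := congrArg Complex.im hh; simp [ht0] at this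
      rw [norm_riemannZeta_eq hne]
      have hh := h (1 + a + 2 * I * t) (by simp; linarith) (by simp; linarith)
      have him : (1 + a + 2 * I * t : ℂ).im = 2 * t := by simp
      rw [him, abs_mul, abs_two] at hh
      have hden : τ ≤ ‖(1 + a + 2 * I * t : ℂ) - 1‖ := by
        have := Complex.abs_im_le_norm ((1 + a + 2 * I * t : ℂ) - 1)
        rw [sub_im, him, one_im, sub_zero, abs_mul, abs_two] at this
        linarith
      rw [div_le_iff₀ (by linarith)]
      calc _ ≤ _ := hh
        _ ≤ C * (2 * τ) ^ (1 + 2 * ε) := by gcongr; linarith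
        _ = C * 2 ^ (1 + 2 * ε) * (τ * τ ^ (2 * ε)) := by
          rw [Real.mul_rpow (by norm_num) (by linarith), Real.rpow_add (by linarith : 0 < τ),
            Real.rpow_one]; ring
        _ ≤ C * 2 ^ (2 : ℝ) * (τ * τ ^ (2 * ε)) := by
          gcongr
          · norm_num
          · linarith
        _ = 4 * C * τ ^ (2 * ε) * τ := by norm_num; ring
        _ ≤ _ := by gcongr
    have q3 : ‖riemannZeta s‖ ≤ 2 * ‖riemannZeta₁ s‖ / τ := by
      have hne : s ≠ 1 := by rintro rfl; simp [ha] at ha0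
      rw [norm_riemannZeta_eq hne]
      have hden : τ / 2 ≤ ‖s - 1‖ := by
        have := Complex.abs_im_le_norm (s - 1)
        rw [sub_im, one_im, sub_zero] at this
        linarith
      rw [div_le_div_iff₀ (by linarith) (by linarith)]
      nlinarith [norm_nonneg (riemannZeta₁ s)]
    have hY := norm_nonneg (riemannZeta₁ s)
    set Y := ‖riemannZeta₁ s‖ with hYdef
    have r : 1 ≤ (C / a) ^ 3 * (2 * Y / τ) ^ 4 * (4 * C * τ ^ (2 * ε)) :=
      p.trans (by gcongr)
    have r2 : a ^ 3 * τ ^ 4 ≤ 64 * C ^ 4 * Y ^ 4 * τ ^ (2 * ε) := by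
      have e : (C / a) ^ 3 * (2 * Y / τ) ^ 4 * (4 * C * τ ^ (2 * ε))
          = (64 * C ^ 4 * Y ^ 4 * τ ^ (2 * ε)) / (a ^ 3 * τ ^ 4) := by
        field_simp; ring
      rw [e, one_le_div (by positivity)] at r
      exact r
    have e4 : τ ^ (4 - 2 * ε) = τ ^ 4 / τ ^ (2 * ε) := by
      rw [Real.rpow_sub (by linarith)]; norm_cast
    rw [e4]
    have hp : 0 < τ ^ (2 * ε) := by positivity
    rw [← mul_div_assoc, div_le_iff₀ hp]
    calc c * a ^ 3 * τ ^ 4 = c * (a ^ 3 * τ ^ 4) := by ring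
      _ ≤ (1 / (256 * C ^ 4)) * (64 * C ^ 4 * Y ^ 4 * τ ^ (2 * ε)) := by
        gcongr
        exact min_le_right _ _
      _ = 1 / 4 * (Y ^ 4 * τ ^ (2 * ε)) := by field_simp; ring
      _ ≤ Y ^ 4 * τ ^ (2 * ε) := by
        have : 0 ≤ Y ^ 4 * τ ^ (2 * ε) := by positivity
        linarith

/-- A zero-free region of width `c (1 + |t|) ^ (-κ)`, and the bound `C (1 + |t|) ^ κ` for the
logarithmic derivative of `(s - 1) ζ(s)` there. -/
lemma exists_zero_free {κ : ℝ} (hκ : 0 < κ) (hκ' : κ ≤ 1) :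
    ∃ c C : ℝ, 0 < c ∧ c ≤ 1 / 2 ∧ 0 < C ∧ ∀ s : ℂ,
      1 - c * (1 + |s.im|) ^ (-κ) ≤ s.re → s.re ≤ 2 →
      riemannZeta₁ s ≠ 0 ∧ ‖deriv riemannZeta₁ s / riemannZeta₁ s‖ ≤ C * (1 + |s.im|) ^ κ := by
  set ε := κ / 10 with hεdef
  have hε : 0 < ε := by positivity
  have hε' : ε ≤ 1 / 2 := by rw [hεdef]; linarith
  have hκε : κ = 10 * ε := by rw [hεdef]; ring
  obtain ⟨C2, hC2, hder⟩ := exists_norm_deriv_riemannZeta₁_le hε hε'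
  obtain ⟨c3, hc3, hlow⟩ := exists_le_norm_riemannZeta₁_pow hε hε'
  set d := c3 ^ (1 / 4 : ℝ) with hd
  have hd0 : 0 < d := by positivity
  have hd4 : d ^ 4 = c3 := by
    rw [hd, ← Real.rpow_natCast, ← Real.rpow_mul hc3.le]; norm_num
  -- The region has width `a = β ^ 4 τ ^ (-κ)`. The `3-4-1` bound at `1 + a + it` is of size
  -- `a ^ (3/4)`, with constant `β ^ 3`, while moving by `2 a` costs a multiple of `β ^ 4`; so a
  -- small `β` makes the lower bound survive.
  set β := min (d / (4 * C2)) (ε / 2) with hβ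
  have hβ0 : 0 < β := by positivity
  have hβ1 : β ≤ ε / 2 := min_le_right _ _
  have hβ2 : 2 * C2 * β ≤ d / 2 := by
    have : β ≤ d / (4 * C2) := min_le_left _ _
    rw [le_div_iff₀ (by positivity)] at this
    linarith
  have hβ3 : β ^ 4 ≤ ε / 2 := by
    have : β ^ 4 ≤ β ^ 1 := pow_le_pow_of_le_one hβ0.le (by linarith) (by norm_num)
    linarith [pow_one β]
  refine ⟨β ^ 4, C2 / (d * β ^ 3 / 2), by positivity, by linarith, by positivity,
    fun s h1 h2 => ?_⟩
  set τ := 1 + |s.im| with hτ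
  have hτ1 : 1 ≤ τ := by rw [hτ]; linarith [abs_nonneg s.im]
  have hτ0 : 0 < τ := by linarith
  set a := β ^ 4 * τ ^ (-κ) with ha
  have ha0 : 0 < a := by positivity
  have hτκ : τ ^ (-κ) ≤ 1 := Real.rpow_le_one_of_one_le_of_nonpos hτ1 (by linarith)
  have ha1 : a ≤ ε / 2 := by
    calc a ≤ β ^ 4 * 1 := by rw [ha]; gcongr
      _ ≤ _ := by linarith
  have low : ∀ z : ℂ, z.im = s.im → 1 + a ≤ z.re → z.re ≤ 2 →
      d * β ^ 3 * τ ^ (1 - 8 * ε) ≤ ‖riemannZeta₁ z‖ := by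
    intro z hz hz1 hz2
    have := hlow z (by linarith) hz2
    rw [hz, ← hτ] at this
    have h4 : (d * β ^ 3 * τ ^ (1 - 8 * ε)) ^ 4 ≤ ‖riemannZeta₁ z‖ ^ 4 := by
      refine le_trans (le_of_eq ?_) (le_trans
        (show c3 * a ^ 3 * τ ^ (4 - 2 * ε) ≤ _ by gcongr; linarith) this)
      rw [ha, mul_pow, mul_pow, mul_pow, hd4, ← Real.rpow_natCast (τ ^ (1 - 8 * ε)),
        ← Real.rpow_mul hτ0.le, ← Real.rpow_natCast (τ ^ (-κ)), ← Real.rpow_mul hτ0.le]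
      rw [show c3 * ((β ^ 4) ^ 3 * τ ^ (-κ * (3 : ℕ))) * τ ^ (4 - 2 * ε)
        = c3 * (β ^ 4) ^ 3 * (τ ^ (-κ * (3 : ℕ)) * τ ^ (4 - 2 * ε)) by ring,
        ← Real.rpow_add hτ0, hκε]
      congr 1
      · ring
      · congr 1; push_cast; ring
    exact le_of_pow_le_pow_left₀ (by norm_num) (norm_nonneg _) h4
  have main : d * β ^ 3 / 2 * τ ^ (1 - 8 * ε) ≤ ‖riemannZeta₁ s‖ := by
    have hp : 0 < τ ^ (1 - 8 * ε) := by positivity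
    rcases le_total (1 + a) s.re with hc | hc
    · refine le_trans ?_ (low s rfl hc h2)
      have : 0 ≤ d * β ^ 3 * τ ^ (1 - 8 * ε) := by positivity
      linarith
    · set z : ℂ := ⟨1 + a, s.im⟩ with hz
      have l1 := low z rfl le_rfl (by simp [hz]; linarith)
      have l2 : ‖riemannZeta₁ z - riemannZeta₁ s‖ ≤ C2 * τ ^ (1 + 2 * ε) * ‖z - s‖ := by
        have hconv : Convex ℝ ((Icc (1 - ε / 2) 2) ×ℂ {s.im} : Set ℂ) :=
          ((convex_Icc _ _).linear_preimage Complex.reLm).inter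
            ((convex_singleton s.im).linear_preimage Complex.imLm)
        refine hconv.norm_image_sub_le_of_norm_deriv_le (𝕜 := ℂ)
          (fun x _ => differentiable_riemannZeta₁ x) ?_ ?_ ?_
        · intro x hx
          obtain ⟨hx1, hx2⟩ := mem_reProdIm.1 hx
          have := hder x hx1.1 hx1.2
          rw [mem_singleton_iff] at hx2
          rwa [hx2] at this
        · exact mem_reProdIm.2 ⟨⟨by linarith, h2⟩, rfl⟩
        · exact mem_reProdIm.2 ⟨⟨by simp [hz]; linarith, by simp [hz]; linarith⟩, rfl⟩
      have l3 : ‖z - s‖ ≤ 2 * a := by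
        refine (Complex.norm_le_abs_re_add_abs_im _).trans ?_
        simp only [hz, sub_re, sub_im, sub_self, abs_zero, add_zero]
        rw [abs_le]; constructor <;> linarith
      have l4 : C2 * τ ^ (1 + 2 * ε) * (2 * a) = 2 * C2 * β * (β ^ 3 * τ ^ (1 - 8 * ε)) := by
        have e : τ ^ (1 - 8 * ε) = τ ^ (1 + 2 * ε) * τ ^ (-κ) := by
          rw [← Real.rpow_add hτ0]; congr 1; rw [hκε]; ring
        rw [ha, e]; ring
      have l5 : ‖riemannZeta₁ z - riemannZeta₁ s‖ ≤ d / 2 * (β ^ 3 * τ ^ (1 - 8 * ε)) := by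
        calc _ ≤ _ := l2
          _ ≤ C2 * τ ^ (1 + 2 * ε) * (2 * a) := by gcongr
          _ = _ := l4
          _ ≤ _ := by gcongr
      have l6 := norm_sub_norm_le (riemannZeta₁ z) (riemannZeta₁ s)
      have : d * β ^ 3 * τ ^ (1 - 8 * ε) = 2 * (d / 2 * (β ^ 3 * τ ^ (1 - 8 * ε))) := by ring
      linarith [show d * β ^ 3 / 2 * τ ^ (1 - 8 * ε) = d / 2 * (β ^ 3 * τ ^ (1 - 8 * ε)) by ring]
  have hmpos : 0 < d * β ^ 3 / 2 * τ ^ (1 - 8 * ε) := by positivity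
  refine ⟨norm_pos_iff.1 (hmpos.trans_le main), ?_⟩
  rw [norm_div, div_le_iff₀ (hmpos.trans_le main)]
  calc _ ≤ C2 * τ ^ (1 + 2 * ε) := hder s (by linarith) h2
    _ = C2 / (d * β ^ 3 / 2) * τ ^ κ * (d * β ^ 3 / 2 * τ ^ (1 - 8 * ε)) := by
      rw [show (1 + 2 * ε) = κ + (1 - 8 * ε) by rw [hκε]; ring, Real.rpow_add hτ0]
      field_simp
    _ ≤ _ := by gcongr

/-! ### Perron kernels -/

lemma norm_kernel_le {s : ℂ} {b : ℝ} (hb : 0 < b) (hb1 : b ≤ 1) (hs : b ≤ s.re) :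
    ‖1 / (s * (s + 1))‖ ≤ b⁻¹ ^ 2 * (1 + s.im ^ 2)⁻¹ := by
  have h1 : b ^ 2 * (1 + s.im ^ 2) ≤ ‖s‖ ^ 2 := by
    rw [Complex.sq_norm, Complex.normSq_apply]
    have : b ^ 2 ≤ s.re ^ 2 := by gcongr
    have : b ^ 2 ≤ 1 := by nlinarith
    nlinarith [sq_nonneg s.im]
  have h2 : ‖s‖ ≤ ‖s + 1‖ := by
    rw [Complex.norm_def, Complex.norm_def]
    apply Real.sqrt_le_sqrt
    simp only [Complex.normSq_apply, add_re, add_im, one_re, one_im]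
    nlinarith
  rw [norm_div, norm_one, norm_mul, one_div, inv_pow, ← mul_inv]
  have h0 : 0 < b ^ 2 * (1 + s.im ^ 2) := by positivity
  exact inv_anti₀ h0 (by nlinarith [norm_nonneg s])

lemma continuous_vertical (σ : ℝ) : Continuous fun t : ℝ => (σ : ℂ) + t * I := by fun_prop

lemma integrable_kernel {σ : ℝ} (hσ : 0 < σ) :
    Integrable fun t : ℝ => 1 / (((σ : ℂ) + t * I) * ((σ : ℂ) + t * I + 1)) := by
  set b := min σ 1
  have hb : 0 < b := lt_min hσ one_pos
  refine (integrable_inv_one_add_sq.const_mul (b⁻¹ ^ 2)).mono' ?_ (ae_of_all _ fun t => ?_)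
  · refine Continuous.aestronglyMeasurable ?_
    refine continuous_const.div (by fun_prop) fun t => ?_
    refine mul_ne_zero (fun h => ?_) (fun h => ?_)
    · have := congrArg Complex.re h; simp at this; linarith
    · have := congrArg Complex.re h; simp at this; linarith
  · simpa using norm_kernel_le (s := σ + t * I) hb (min_le_right _ _) (by simp [b])

/-- Perron's formula for the weight `(1 - y)⁺`. -/
lemma perron_kernel {σ : ℝ} (hσ : 0 < σ) {y : ℝ} (hy : 0 < y) :
    ∫ t : ℝ, (y : ℂ) ^ (-((σ : ℂ) + t * I)) * (1 / (((σ : ℂ) + t * I) * ((σ : ℂ) + t * I + 1)))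
      = 2 * Real.pi * (max (1 - y) 0 : ℝ) := by
  set f : ℝ → ℂ := fun y => (max (1 - y) 0 : ℝ)
  have hm : ∀ s : ℂ, 0 < s.re → HasMellin f s (1 / (s * (s + 1))) := by
    intro s hs
    have h1 := hasMellin_one_Ioc hs
    have h2 := hasMellin_cpow_Ioc 1 (s := s) (by simp; linarith)
    have h3 := hasMellin_sub h1.1 h2.1
    rw [h1.2, h2.2] at h3
    have e : 1 / s - 1 / (s + 1) = 1 / (s * (s + 1)) := by
      have : s ≠ 0 := by rintro rfl; simp at hs
      have : s + 1 ≠ 0 := fun h => by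
        have := congrArg Complex.re h; simp at this; linarith
      field_simp; ring
    rw [e] at h3
    have he : ∀ t ∈ Ioi (0 : ℝ), (t : ℂ) ^ (s - 1) • ((Ioc 0 1).indicator (fun _ => (1:ℂ)) t -
        (Ioc 0 1).indicator (fun t : ℝ => (t : ℂ) ^ (1 : ℂ)) t) = (t : ℂ) ^ (s - 1) • f t := by
      intro t ht
      rw [mem_Ioi] at ht
      by_cases h : t ≤ 1
      · have : t ∈ Ioc (0:ℝ) 1 := ⟨ht, h⟩
        simp [f, this, max_eq_left (sub_nonneg.2 h)]
      · have : t ∉ Ioc (0:ℝ) 1 := fun h' => h h'.2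
        have h'' : max (1 - t) 0 = 0 := max_eq_right (by linarith)
        simp [f, this, h'']
    refine ⟨(integrableOn_congr_fun he measurableSet_Ioi).1 h3.1, ?_⟩
    rw [← h3.2]
    exact (setIntegral_congr_fun measurableSet_Ioi he).symm
  have hre : ∀ t : ℝ, 0 < ((σ : ℂ) + t * I).re := fun t => by simpa using hσ
  have key := mellinInv_mellin_eq σ f hy (hm σ (by simpa using hσ)).1 ?_ ?_
  · simp only [mellinInv, smul_eq_mul] at key
    rw [integral_congr_ae (ae_of_all _ fun t => by
      show _ = (y : ℂ) ^ (-((σ : ℂ) + t * I)) * mellin f (σ + t * I)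
      rw [(hm _ (hre t)).2])]
    change _ = 2 * Real.pi * f y
    rw [← key, Complex.real_smul]
    push_cast
    rw [← mul_assoc, mul_one_div_cancel (by simp), one_mul]
  · refine (integrable_kernel hσ).congr (ae_of_all _ fun t => ?_)
    exact (hm _ (hre t)).2.symm
  · exact Continuous.continuousAt (by fun_prop)

lemma integrable_kernel' {σ : ℝ} (hσ : 1 < σ) :
    Integrable fun t : ℝ =>
      1 / (((σ : ℂ) + t * I - 1) * (((σ : ℂ) + t * I) * ((σ : ℂ) + t * I + 1))) := by
  refine ((integrable_kernel (zero_lt_one.trans hσ)).norm.const_mul (σ - 1)⁻¹).mono' ?_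
    (ae_of_all _ fun t => ?_)
  · refine Continuous.aestronglyMeasurable ?_
    refine continuous_const.div (by fun_prop) fun t => ?_
    refine mul_ne_zero (fun h => ?_) (mul_ne_zero (fun h => ?_) (fun h => ?_))
    all_goals (have := congrArg Complex.re h; simp at this; linarith)
  · rw [← one_div_mul_one_div, norm_mul]
    gcongr
    rw [norm_div, norm_one, one_div]
    have : 0 < σ - 1 := by linarith
    gcongr
    have := Complex.re_le_norm ((σ : ℂ) + t * I - 1)
    simpa using this

/-- Perron's formula for `(1 - y)² / (2y)`, the weight that accounts for the pole of `ζ`. -/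
lemma perron_kernel' {σ : ℝ} (hσ : 1 < σ) {y : ℝ} (hy : 0 < y) (hy1 : y < 1) :
    ∫ t : ℝ, (y : ℂ) ^ (-((σ : ℂ) + t * I)) *
      (1 / (((σ : ℂ) + t * I - 1) * (((σ : ℂ) + t * I) * ((σ : ℂ) + t * I + 1))))
      = 2 * Real.pi * ((1 - y) ^ 2 / (2 * y) : ℝ) := by
  set f : ℝ → ℂ := fun y => (Ioc 0 1).indicator (fun t : ℝ => ((1 - t) ^ 2 / (2 * t) : ℂ)) y
  have hm : ∀ s : ℂ, 1 < s.re → HasMellin f s (1 / ((s - 1) * (s * (s + 1)))) := by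
    intro s hs
    have h1 := hasMellin_one_Ioc (s := s) (by linarith)
    have h2 := hasMellin_cpow_Ioc 1 (s := s) (by simp; linarith)
    have h0 := hasMellin_cpow_Ioc (-1) (s := s) (by simp; linarith)
    have h2' := hasMellin_const_smul h2.1 (1 / 2 : ℂ)
    have h0' := hasMellin_const_smul h0.1 (1 / 2 : ℂ)
    have h4 := hasMellin_add h2'.1 h0'.1
    have h3 := hasMellin_sub h4.1 h1.1
    rw [h4.2, h1.2, h2'.2, h0'.2, h2.2, h0.2] at h3
    have e : ((1 / 2 : ℂ) • (1 / (s + 1)) + (1 / 2 : ℂ) • (1 / (s + -1))) - 1 / s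
        = 1 / ((s - 1) * (s * (s + 1))) := by
      have : s ≠ 0 := by rintro rfl; simp at hs; linarith
      have : s + 1 ≠ 0 := fun h => by
        have := congrArg Complex.re h; simp at this; linarith
      have : s - 1 ≠ 0 := fun h => by
        have := congrArg Complex.re h; simp at this; linarith
      rw [← sub_eq_add_neg, smul_eq_mul, smul_eq_mul]
      field_simp; ring
    rw [e] at h3
    have hfe : f = fun t => (1 / 2 : ℂ) • (Ioc 0 1).indicator (fun t : ℝ => (t : ℂ) ^ (1 : ℂ)) t
        + (1 / 2 : ℂ) • (Ioc 0 1).indicator (fun t : ℝ => (t : ℂ) ^ (-1 : ℂ)) t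
        - (Ioc 0 1).indicator (fun _ => 1) t := by
      funext t
      by_cases h : t ∈ Ioc (0 : ℝ) 1
      · have ht : (t : ℂ) ≠ 0 := by exact_mod_cast h.1.ne'
        simp only [f, indicator_of_mem h, cpow_one, cpow_neg_one, smul_eq_mul]
        field_simp; ring
      · simp [f, indicator_of_notMem h]
    rw [hfe]; exact h3
  have hre : ∀ t : ℝ, 1 < ((σ : ℂ) + t * I).re := fun t => by simpa using hσ
  have key := mellinInv_mellin_eq σ f hy (hm σ (by simpa using hσ)).1 ?_ ?_
  · simp only [mellinInv, smul_eq_mul] at key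
    rw [integral_congr_ae (ae_of_all _ fun t => by
      show _ = (y : ℂ) ^ (-((σ : ℂ) + t * I)) * mellin f (σ + t * I)
      rw [(hm _ (hre t)).2])]
    have hfy : (((1 - y) ^ 2 / (2 * y) : ℝ) : ℂ) = f y := by
      simp only [f]
      rw [indicator_of_mem (show y ∈ Ioc (0 : ℝ) 1 from ⟨hy, hy1.le⟩)]; push_cast; ring
    rw [hfy, ← key, Complex.real_smul]
    push_cast
    rw [← mul_assoc, mul_one_div_cancel (by simp), one_mul]
  · refine (integrable_kernel' hσ).congr (ae_of_all _ fun t => ?_)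
    exact (hm _ (hre t)).2.symm
  · have hc : ContinuousAt (fun t : ℝ => ((1 - t) ^ 2 / (2 * t) : ℂ)) y :=
      ContinuousAt.div (by fun_prop) (by fun_prop) (by
        have : (y : ℂ) ≠ 0 := by exact_mod_cast hy.ne'
        simpa using this)
    refine hc.congr ?_
    filter_upwards [Ioo_mem_nhds hy hy1] with t ht
    simp only [f]
    rw [indicator_of_mem (show t ∈ Ioc (0 : ℝ) 1 from ⟨ht.1, ht.2.le⟩)]

/-! ### The smoothed explicit formula -/

/-- Minus the logarithmic derivative of the entire function `(s - 1) ζ(s)`. -/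
noncomputable def regLogDeriv (s : ℂ) : ℂ := -(deriv riemannZeta₁ s / riemannZeta₁ s)

lemma LSeries_vonMangoldt_eq_inv_add {s : ℂ} (hs : 1 < s.re) :
    LSeries (fun n => (ArithmeticFunction.vonMangoldt n : ℂ)) s
      = 1 / (s - 1) + regLogDeriv s := by
  have h1 : s ≠ 1 := by rintro rfl; simp at hs
  have h2 := riemannZeta₁_ne_zero hs.le
  have h3 := sub_ne_zero.2 h1
  rw [ArithmeticFunction.LSeries_vonMangoldt_eq_deriv_riemannZeta_div hs,
    deriv_riemannZeta_eq_neg_inv_sub_sq_mul_add h1, riemannZeta_eq_inv_sub_mul h1, regLogDeriv]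
  field_simp
  ring

lemma differentiableAt_regLogDeriv {s : ℂ} (hs : riemannZeta₁ s ≠ 0) :
    DifferentiableAt ℂ regLogDeriv s := by
  refine ((DifferentiableAt.div ?_ (differentiable_riemannZeta₁ s) hs).neg)
  exact (differentiable_riemannZeta₁.analyticAt s).deriv.differentiableAt

lemma cpow_div_neg {x y : ℝ} (hx : 0 < x) (hy : 0 ≤ y) (s : ℂ) :
    ((y / x : ℝ) : ℂ) ^ (-s) = (x : ℂ) ^ s * (y : ℂ) ^ (-s) := by
  rw [div_eq_mul_inv, ofReal_mul, Complex.mul_cpow_ofReal_nonneg hy (inv_nonneg.2 hx.le),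
    ofReal_inv, Complex.inv_cpow _ _ (by
      rw [Complex.arg_ofReal_of_nonneg hx.le]; exact Real.pi_ne_zero.symm), cpow_neg _ s,
    cpow_neg _ s, inv_inv, mul_comm]

lemma norm_cpow_vertical {x : ℝ} (hx : 0 < x) (σ t : ℝ) :
    ‖(x : ℂ) ^ ((σ : ℂ) + t * I)‖ = x ^ σ := by
  rw [norm_cpow_eq_rpow_re_of_pos hx]; simp

lemma continuous_cpow_vertical {x : ℝ} (hx : 0 < x) (σ : ℝ) :
    Continuous fun t : ℝ => (x : ℂ) ^ ((σ : ℂ) + t * I) := by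
  have h : (x : ℂ) ≠ 0 := by exact_mod_cast hx.ne'
  exact (continuous_vertical σ).const_cpow (Or.inl h)

/-- The explicit formula for the smoothed Chebyshev sum, before moving the contour. -/
lemma explicit_formula {x σ : ℝ} (hx : 1 < x) (hσ : 1 < σ) :
    Integrable (fun t : ℝ => (x : ℂ) ^ ((σ : ℂ) + t * I) *
      (1 / (((σ : ℂ) + t * I) * ((σ : ℂ) + t * I + 1))) * regLogDeriv (σ + t * I)) ∧
    ∫ t : ℝ, (x : ℂ) ^ ((σ : ℂ) + t * I) *
      (1 / (((σ : ℂ) + t * I) * ((σ : ℂ) + t * I + 1))) * regLogDeriv (σ + t * I)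
      = 2 * Real.pi * ((∑' n : ℕ, ArithmeticFunction.vonMangoldt n * max (1 - n / x) 0)
        - (x - 1) ^ 2 / (2 * x) : ℝ) := by
  have hx0 : 0 < x := by linarith
  have hσ0 : 0 < σ := by linarith
  set S : ℝ → ℂ := fun t => (σ : ℂ) + t * I with hS
  have hre : ∀ t, (S t).re = σ := fun t => by simp [hS]
  have hre1 : ∀ t, 1 < (S t).re := fun t => by rw [hre]; exact hσ
  set k : ℝ → ℂ := fun t => 1 / (S t * (S t + 1)) with hk
  set a : ℕ → ℂ := fun n => (ArithmeticFunction.vonMangoldt n : ℂ) with ha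
  have hkint : Integrable k := integrable_kernel hσ0
  have hsum : LSeriesSummable a (σ : ℂ) :=
    ArithmeticFunction.LSeriesSummable_vonMangoldt (by simpa using hσ)
  have hterm : ∀ t n, ‖LSeries.term a (S t) n‖ = ‖LSeries.term a (σ : ℂ) n‖ := fun t n => by
    rw [LSeries.norm_term_eq, LSeries.norm_term_eq, hre, ofReal_re]
  have hFint : ∀ n, Integrable (fun t => (x : ℂ) ^ S t * k t * LSeries.term a (S t) n) := by
    intro n
    have hb : Integrable fun t => k t * ((x : ℂ) ^ S t * LSeries.term a (S t) n) := by
      refine hkint.mul_bdd (c := x ^ σ * ‖LSeries.term a (σ : ℂ) n‖) ?_ (ae_of_all _ fun t => ?_)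
      · refine Continuous.aestronglyMeasurable ?_
        refine (continuous_cpow_vertical hx0 σ).mul ?_
        rcases eq_or_ne n 0 with rfl | hn
        · simp only [LSeries.term_zero]; exact continuous_const
        · simp only [LSeries.term_of_ne_zero hn]
          have := continuous_cpow_vertical (x := n) (by positivity) σ
          refine continuous_const.div (by exact_mod_cast this) fun t => ?_
          simp [cpow_eq_zero_iff, hn]
      · rw [norm_mul, norm_cpow_vertical hx0, hterm]
    refine hb.congr (ae_of_all _ fun t => ?_)
    ring
  have hFsum : Summable fun n => ∫ t, ‖(x : ℂ) ^ S t * k t * LSeries.term a (S t) n‖ := by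
    have : Summable fun n => (x ^ σ * ∫ t, ‖k t‖) * ‖LSeries.term a (σ : ℂ) n‖ :=
      hsum.norm.mul_left _
    refine this.congr fun n => ?_
    simp_rw [norm_mul, hterm]
    rw [integral_mul_const]
    congr 1
    rw [← integral_const_mul]
    congr 1
    ext t
    rw [hS, norm_cpow_vertical hx0]
  have hsumInt := hasSum_integral_of_summable_integral_norm hFint hFsum
  have hterms : ∀ n, ∫ t, (x : ℂ) ^ S t * k t * LSeries.term a (S t) n
      = 2 * Real.pi * ((ArithmeticFunction.vonMangoldt n * max (1 - n / x) 0 : ℝ) : ℂ) := by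
    intro n
    rcases eq_or_ne n 0 with rfl | hn
    · simp
    · have hn0 : (0 : ℝ) < n := by positivity
      have := perron_kernel hσ0 (y := n / x) (by positivity)
      rw [ofReal_mul, mul_left_comm, ← this, ← integral_const_mul]
      congr 1
      ext t
      rw [cpow_div_neg hx0 hn0.le, LSeries.term_of_ne_zero hn, cpow_neg]
      simp only [ha, hk, hS]
      push_cast
      ring
  have htsum : ∀ t, ∑' n, (x : ℂ) ^ S t * k t * LSeries.term a (S t) n
      = (x : ℂ) ^ S t * k t * (1 / (S t - 1) + regLogDeriv (S t)) := by
    intro t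
    rw [tsum_mul_left, ← LSeries_vonMangoldt_eq_inv_add (hre1 t)]
    rfl
  have hL : Integrable fun t => (x : ℂ) ^ S t * k t * regLogDeriv (S t) := by
    have hcont : Continuous fun t => regLogDeriv (S t) := by
      refine continuous_iff_continuousAt.2 fun t => ?_
      exact (differentiableAt_regLogDeriv
        (riemannZeta₁_ne_zero (hre1 t).le)).continuousAt.comp (continuous_vertical σ).continuousAt
    have hb : Integrable fun t => k t * ((x : ℂ) ^ S t * regLogDeriv (S t)) := by
      refine hkint.mul_bdd (c := x ^ σ * ((∑' n, ‖LSeries.term a (σ : ℂ) n‖) + (σ - 1)⁻¹))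
        ((continuous_cpow_vertical hx0 σ).mul hcont).aestronglyMeasurable (ae_of_all _ fun t => ?_)
      rw [norm_mul, norm_cpow_vertical hx0]
      gcongr
      have e : regLogDeriv (S t) = LSeries a (S t) - 1 / (S t - 1) := by
        rw [LSeries_vonMangoldt_eq_inv_add (hre1 t)]; ring
      rw [e]
      refine (norm_sub_le _ _).trans (add_le_add ?_ ?_)
      · have : ∑' n, ‖LSeries.term a (σ : ℂ) n‖ = ∑' n, ‖LSeries.term a (S t) n‖ := by
          simp_rw [hterm]
        rw [this]
        refine norm_tsum_le_tsum_norm ?_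
        simp_rw [hterm]; exact hsum.norm
      · rw [norm_div, norm_one, one_div]
        have : 0 < σ - 1 := by linarith
        gcongr
        have := Complex.re_le_norm (S t - 1)
        simpa [hS] using this
    refine hb.congr (ae_of_all _ fun t => ?_)
    ring
  have hpole : Integrable fun t => (x : ℂ) ^ S t * (1 / ((S t - 1) * (S t * (S t + 1)))) :=
    (integrable_kernel' hσ).bdd_mul (c := x ^ σ)
      (continuous_cpow_vertical hx0 σ).aestronglyMeasurable
      (ae_of_all _ fun t => (norm_cpow_vertical hx0 σ t).le)
  have hpoleval : ∫ t, (x : ℂ) ^ S t * (1 / ((S t - 1) * (S t * (S t + 1))))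
      = 2 * Real.pi * ((x - 1) ^ 2 / (2 * x) : ℝ) := by
    have := perron_kernel' hσ (y := 1 / x) (by positivity) (by rwa [div_lt_one hx0])
    rw [show (1 - 1 / x) ^ 2 / (2 * (1 / x)) = (x - 1) ^ 2 / (2 * x) by field_simp] at this
    rw [← this]
    congr 1
    ext t
    rw [cpow_div_neg hx0 zero_le_one]
    simp [hS]
  refine ⟨hL, ?_⟩
  have hval := hsumInt.tsum_eq
  simp_rw [hterms, htsum] at hval
  rw [tsum_mul_left, ← ofReal_tsum] at hval
  rw [ofReal_sub, mul_sub, hval, ← hpoleval, ← integral_sub ?_ hpole]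
  · congr 1
    ext t
    have e : 1 / ((S t - 1) * (S t * (S t + 1))) = 1 / (S t - 1) * k t :=
      (one_div_mul_one_div _ _).symm
    change (x : ℂ) ^ S t * k t * regLogDeriv (S t) = _
    rw [e]
    ring
  · refine (hL.add hpole).congr (ae_of_all _ fun t => ?_)
    have e : 1 / ((S t - 1) * (S t * (S t + 1))) = 1 / (S t - 1) * k t :=
      (one_div_mul_one_div _ _).symm
    simp only [Pi.add_apply]
    rw [e]
    ring

/-! ### The smoothed prime number theorem -/

lemma inv_one_add_sq_le (t : ℝ) : (1 + t ^ 2)⁻¹ ≤ 2 * ((1 + |t|) ^ 2)⁻¹ := by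
  rw [← sq_abs, ← div_eq_mul_inv, inv_eq_one_div, div_le_div_iff₀ (by positivity)
    (by positivity)]
  nlinarith [sq_nonneg (|t| - 1)]

set_option maxHeartbeats 1000000 in
/-- The prime number theorem with a saving of eleven logarithms, for the smoothed Chebyshev sum. -/
lemma exists_smoothed_pnt : ∃ C : ℝ, 0 < C ∧ ∀ x : ℝ, Real.exp 1 ≤ x →
    |(∑' n : ℕ, ArithmeticFunction.vonMangoldt n * max (1 - n / x) 0) - (x - 1) ^ 2 / (2 * x)|
      ≤ C * (x / Real.log x ^ 11) := by
  set κ : ℝ := 1 / 44 with hκ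
  obtain ⟨c, C, hc, hc2, hC, hzf⟩ := exists_zero_free (κ := κ) (by norm_num) (by norm_num)
  set K0 : ℝ := ∫ t : ℝ, (1 + ‖t‖) ^ (-(5 / 4) : ℝ) with hK0
  have hK0int : Integrable fun t : ℝ => (1 + ‖t‖) ^ (-(5 / 4) : ℝ) :=
    integrable_one_add_norm (by norm_num)
  have hK0n : 0 ≤ K0 := integral_nonneg fun t => by positivity
  set E := Real.exp 1 with hE
  have hE0 : 0 < E := Real.exp_pos 1
  -- `C1`, `C2`, `C3` bound the contributions of the tail `|Im s| > T` of the line `Re s = σ0`,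
  -- of each horizontal side, and of the side `Re s = σ1` inside the zero-free region.
  set C1 := 8 * E * C * K0 with hC1
  set C2 := 12 * E * C with hC2
  set C3 := 4 * C * Real.pi * ((Nat.factorial 23 : ℝ) / c ^ 23) with hC3
  refine ⟨C1 + 2 * C2 + C3, by positivity, fun x hx => ?_⟩
  have hx1 : 1 < x := lt_of_lt_of_le (by have := Real.add_one_lt_exp one_ne_zero; linarith) hx
  have hx0 : 0 < x := by linarith
  set L := Real.log x with hL
  have hL1 : 1 ≤ L := by rw [hL, Real.le_log_iff_exp_le hx0]; exact hx
  have hL0 : 0 < L := by linarith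
  have hxL : x = Real.exp L := (Real.exp_log hx0).symm
  set u := Real.sqrt L with hu
  have hu1 : 1 ≤ u := by rw [hu]; exact Real.one_le_sqrt.2 hL1
  have hu0 : 0 < u := by linarith
  have huL : u ^ 2 = L := Real.sq_sqrt hL0.le
  -- With `κ = 1/44` and `τ = (log x) ^ 22` the zero-free region up to height `T = τ - 1` has width
  -- at least `c / √(log x)`, so that `x ^ (σ1 - 1) = exp (-c √(log x))`.
  set τ := L ^ 22 with hτ
  have hτ1 : 1 ≤ τ := one_le_pow₀ hL1
  have hτ0 : 0 < τ := by linarith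
  have hτu : τ = u ^ 44 := by rw [hτ, ← huL]; ring
  have hτκ : τ ^ κ = u := by
    rw [hτu, ← Real.rpow_natCast, ← Real.rpow_mul hu0.le, hκ]; norm_num
  have hτκ' : τ ^ (-κ) = u⁻¹ := by rw [Real.rpow_neg hτ0.le, hτκ]
  set T := τ - 1 with hT
  have hT0 : 0 ≤ T := by linarith
  set σ0 := 1 + 1 / L with hσ0
  set σ1 := 1 - c * u⁻¹ with hσ1
  have hLi : 1 / L ≤ 1 := by rw [div_le_one hL0]; exact hL1
  have hLi0 : 0 < 1 / L := by positivity
  have hui : u⁻¹ ≤ 1 := inv_le_one_of_one_le₀ hu1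
  have hui0 : 0 < u⁻¹ := by positivity
  have hσ1h : 1 / 2 ≤ σ1 := by rw [hσ1]; nlinarith
  have hσ11 : σ1 ≤ 1 := by rw [hσ1]; nlinarith
  have hσ0x : x ^ σ0 = E * x := by
    rw [hσ0, Real.rpow_add hx0, Real.rpow_one, Real.rpow_def_of_pos hx0, ← hL,
      mul_one_div_cancel hL0.ne', ← hE, mul_comm]
  have hσ1x : x ^ σ1 = x * Real.exp (-(c * u)) := by
    rw [hσ1, sub_eq_add_neg, Real.rpow_add hx0, Real.rpow_one, Real.rpow_def_of_pos hx0, ← hL,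
      ← huL]
    congr 2
    field_simp
  set f : ℂ → ℂ := fun s => (x : ℂ) ^ s * (1 / (s * (s + 1))) * regLogDeriv s with hf
  obtain ⟨hfint, hval⟩ := explicit_formula hx1 (σ := σ0) (by linarith)
  set Δ := (∑' n : ℕ, ArithmeticFunction.vonMangoldt n * max (1 - n / x) 0)
    - (x - 1) ^ 2 / (2 * x) with hΔ
  change Integrable (fun t : ℝ => f (σ0 + t * I)) at hfint
  change ∫ t : ℝ, f (σ0 + t * I) = _ at hval
  have hbound : ∀ s : ℂ, 1 / 2 ≤ s.re → s.re ≤ 2 → 1 - c * (1 + |s.im|) ^ (-κ) ≤ s.re →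
      ‖f s‖ ≤ x ^ s.re * (4 * (1 + s.im ^ 2)⁻¹) * (C * (1 + |s.im|) ^ κ) := by
    intro s h1 h2 h3
    rw [hf]
    simp only
    rw [norm_mul, norm_mul, norm_cpow_eq_rpow_re_of_pos hx0]
    have a1 := norm_kernel_le (b := 1 / 2) (by norm_num) (by norm_num) h1
    have a2 := (hzf s h3 h2).2
    rw [regLogDeriv, norm_neg]
    gcongr
    refine a1.trans (le_of_eq ?_)
    norm_num
  have hregion : ∀ s : ℂ, σ1 ≤ s.re → |s.im| ≤ T → 1 - c * (1 + |s.im|) ^ (-κ) ≤ s.re := by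
    intro s h1 h2
    refine le_trans ?_ h1
    rw [hσ1, ← hτκ']
    have : τ ^ (-κ) ≤ (1 + |s.im|) ^ (-κ) :=
      Real.rpow_le_rpow_of_nonpos (by positivity) (by linarith) (by norm_num [hκ])
    gcongr
  have hκu : ∀ t : ℝ, |t| ≤ T → (1 + |t|) ^ κ ≤ u := by
    intro t ht
    rw [← hτκ]
    exact Real.rpow_le_rpow (by positivity) (by linarith) (by norm_num [hκ])
  -- Cauchy's theorem on the rectangle `[σ1, σ0] × [-T, T]`
  have hdiff : DifferentiableOn ℂ f
      (uIcc (⟨σ1, -T⟩ : ℂ).re (⟨σ0, T⟩ : ℂ).re ×ℂ uIcc (⟨σ1, -T⟩ : ℂ).im (⟨σ0, T⟩ : ℂ).im) := by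
    intro s hs
    rw [mem_reProdIm] at hs
    obtain ⟨hs1, hs2⟩ := hs
    simp only at hs1 hs2
    rw [uIcc_of_le (by linarith)] at hs1 hs2
    have him : |s.im| ≤ T := abs_le.2 hs2
    have hre : 0 < s.re := by linarith [hs1.1]
    have hz := (hzf s (hregion s hs1.1 him) (by linarith [hs1.2])).1
    refine DifferentiableAt.differentiableWithinAt ?_
    refine DifferentiableAt.mul (DifferentiableAt.mul ?_ ?_) (differentiableAt_regLogDeriv hz)
    · exact DifferentiableAt.const_cpow differentiableAt_id
        (Or.inl (by exact_mod_cast hx0.ne'))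
    · refine DifferentiableAt.div (by fun_prop) (by fun_prop) ?_
      refine mul_ne_zero (fun h => ?_) (fun h => ?_)
      all_goals (have := congrArg Complex.re h; simp at this; linarith)
  have hrect := Complex.integral_boundary_rect_eq_zero_of_differentiableOn f ⟨σ1, -T⟩ ⟨σ0, T⟩ hdiff
  simp only [smul_eq_mul] at hrect
  have hcL : 1 ≤ L ^ 11 := one_le_pow₀ hL1
  have hhor : ∀ b : ℝ, |b| = T → ‖∫ y in σ1..σ0, f (y + b * I)‖ ≤ C2 * (x / L ^ 11) := by
    intro b hb
    have hM : ∀ y ∈ uIoc σ1 σ0, ‖f (y + b * I)‖ ≤ 8 * E * C * (x / L ^ 11) := by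
      intro y hy
      rw [uIoc_of_le (by linarith)] at hy
      have h := hbound (y + b * I) (by simp; linarith [hy.1]) (by simp; linarith [hy.2])
        (hregion _ (by simp; linarith [hy.1]) (by simp [hb]))
      simp only [add_re, ofReal_re, mul_re, I_re, mul_zero, ofReal_im, I_im, mul_one, sub_self,
        add_zero, add_im, mul_im, zero_add] at h
      refine h.trans ?_
      have e1 : x ^ y ≤ E * x := by
        rw [← hσ0x]; exact Real.rpow_le_rpow_of_exponent_le hx1.le hy.2
      have e2 : (1 + b ^ 2)⁻¹ ≤ 2 * (τ ^ 2)⁻¹ := by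
        have := inv_one_add_sq_le b
        rwa [hb, hT, add_sub_cancel] at this
      have e3 := hκu b hb.le
      have e4 : u * (τ ^ 2)⁻¹ ≤ 1 / L ^ 11 := by
        rw [← div_eq_mul_inv, div_le_div_iff₀ (by positivity) (by positivity), hτu, ← huL]
        calc u * (u ^ 2) ^ 11 = u ^ 23 := by ring
          _ ≤ u ^ 88 := pow_le_pow_right₀ hu1 (by norm_num)
          _ = _ := by ring
      calc _ ≤ E * x * (4 * (2 * (τ ^ 2)⁻¹)) * (C * u) := by gcongr
        _ = 8 * E * C * x * (u * (τ ^ 2)⁻¹) := by ring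
        _ ≤ 8 * E * C * x * (1 / L ^ 11) := by gcongr
        _ = _ := by ring
    refine (intervalIntegral.norm_integral_le_of_norm_le_const hM).trans ?_
    have : |σ0 - σ1| ≤ 3 / 2 := by rw [abs_le]; constructor <;> linarith
    calc _ ≤ 8 * E * C * (x / L ^ 11) * (3 / 2) := by gcongr
      _ = _ := by rw [hC2]; ring
  have hleft : ‖∫ y in (-T)..T, f (σ1 + y * I)‖ ≤ C3 * (x / L ^ 11) := by
    set B := x * Real.exp (-(c * u)) * 4 * (C * u) with hB
    have hpt : ∀ y ∈ Icc (-T) T, ‖f (σ1 + y * I)‖ ≤ B * (1 + y ^ 2)⁻¹ := by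
      intro y hy
      have hyT := abs_le.2 hy
      have h := hbound (σ1 + y * I) (by simp; linarith) (by simp; linarith)
        (hregion _ (by simp) (by simpa using hyT))
      simp only [add_re, ofReal_re, mul_re, I_re, mul_zero, ofReal_im, I_im, mul_one, sub_self,
        add_zero, add_im, mul_im, zero_add] at h
      refine h.trans ?_
      have e3 := hκu y hyT
      calc _ ≤ x ^ σ1 * (4 * (1 + y ^ 2)⁻¹) * (C * u) := by gcongr
        _ = _ := by rw [hB, hσ1x]; ring
    have h1 : ‖∫ y in (-T)..T, f (σ1 + y * I)‖ ≤ ∫ y in (-T)..T, B * (1 + y ^ 2)⁻¹ :=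
      intervalIntegral.norm_integral_le_of_norm_le (by linarith)
        (ae_of_all _ fun t ht => hpt t ⟨ht.1.le, ht.2⟩)
        ((integrable_inv_one_add_sq.const_mul B).intervalIntegrable)
    have h2 : ∫ y in (-T)..T, B * (1 + y ^ 2)⁻¹ ≤ B * Real.pi := by
      rw [intervalIntegral.integral_of_le (by linarith), integral_const_mul,
        ← integral_univ_inv_one_add_sq]
      refine mul_le_mul_of_nonneg_left ?_ (by positivity)
      exact setIntegral_le_integral integrable_inv_one_add_sq (ae_of_all _ fun t => by positivity)
    refine h1.trans (h2.trans ?_)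
    have h3 := Real.pow_div_factorial_le_exp (c * u) (by positivity) 23
    have h4 : u * Real.exp (-(c * u)) ≤ (Nat.factorial 23 : ℝ) / c ^ 23 / L ^ 11 := by
      rw [Real.exp_neg, ← div_eq_mul_inv, div_div, div_le_div_iff₀ (by positivity) (by positivity),
        ← huL]
      rw [div_le_iff₀ (by positivity)] at h3
      calc u * (c ^ 23 * (u ^ 2) ^ 11) = (c * u) ^ 23 := by ring
        _ ≤ _ := h3
        _ = _ := by ring
    calc B * Real.pi = 4 * C * Real.pi * x * (u * Real.exp (-(c * u))) := by rw [hB]; ring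
      _ ≤ 4 * C * Real.pi * x * ((Nat.factorial 23 : ℝ) / c ^ 23 / L ^ 11) := by gcongr
      _ = _ := by rw [hC3]; ring
  have hcentral : ‖∫ y in (-T)..T, f (σ0 + y * I)‖ ≤ (2 * C2 + C3) * (x / L ^ 11) := by
    have e : I * ∫ y in (-T)..T, f (σ0 + y * I) = I * (∫ y in (-T)..T, f (σ1 + y * I))
        + (∫ y in σ1..σ0, f (y + (T : ℝ) * I)) - ∫ y in σ1..σ0, f (y + (-T : ℝ) * I) := by
      linear_combination hrect
    have e2 : ‖∫ y in (-T)..T, f (σ0 + y * I)‖ = ‖I * ∫ y in (-T)..T, f (σ0 + y * I)‖ := by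
      rw [norm_mul, norm_I, one_mul]
    rw [e2, e]
    refine (norm_sub_le _ _).trans ?_
    have t1 := norm_add_le (I * (∫ y in (-T)..T, f (σ1 + y * I)))
      (∫ y in σ1..σ0, f (y + (T : ℝ) * I))
    rw [norm_mul, norm_I, one_mul] at t1
    have t2 := hhor T (abs_of_nonneg hT0)
    have t3 := hhor (-T) (by rw [abs_neg, abs_of_nonneg hT0])
    linarith
  have htail : ‖∫ t in (Ioc (-T) T)ᶜ, f (σ0 + t * I)‖ ≤ C1 * (x / L ^ 11) := by
    have hpt : ∀ t ∈ (Ioc (-T) T)ᶜ, ‖f (σ0 + t * I)‖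
        ≤ 8 * E * C * (x / L ^ 11) * (1 + ‖t‖) ^ (-(5 / 4) : ℝ) := by
      intro t ht
      have htT : τ ≤ 1 + |t| := by
        by_contra! h
        have h' : |t| < T := by linarith
        rw [abs_lt] at h'
        exact ht ⟨h'.1, h'.2.le⟩
      have h := hbound (σ0 + t * I) (by simp; linarith) (by simp; linarith) (by
        have : 0 ≤ c * (1 + |t|) ^ (-κ) := by positivity
        simp; linarith)
      simp only [add_re, ofReal_re, mul_re, I_re, mul_zero, ofReal_im, I_im, mul_one, sub_self,
        add_zero, add_im, mul_im, zero_add] at h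
      refine h.trans ?_
      rw [hσ0x, Real.norm_eq_abs]
      set v := 1 + |t| with hv
      have hv1 : 1 ≤ v := by linarith [abs_nonneg t]
      have hv0 : 0 < v := by linarith
      have e1 : (1 + t ^ 2)⁻¹ ≤ 2 * (v ^ 2)⁻¹ := inv_one_add_sq_le t
      have e2 : (v ^ 2)⁻¹ * v ^ κ ≤ 1 / L ^ 11 * v ^ (-(5 / 4) : ℝ) := by
        have a1 : (v ^ 2)⁻¹ = v ^ (-2 : ℝ) := by
          rw [Real.rpow_neg hv0.le]; norm_num
        have a2 : v ^ (-(1 / 2) : ℝ) ≤ 1 / L ^ 11 := by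
          calc v ^ (-(1 / 2) : ℝ) ≤ τ ^ (-(1 / 2) : ℝ) :=
                Real.rpow_le_rpow_of_nonpos hτ0 htT (by norm_num)
            _ = 1 / L ^ 11 := by
                rw [Real.rpow_neg hτ0.le, one_div, hτ, ← Real.rpow_natCast,
                  ← Real.rpow_mul hL0.le]
                norm_num
        rw [a1, ← Real.rpow_add hv0]
        calc v ^ (-2 + κ) ≤ v ^ (-(1 / 2) + -(5 / 4) : ℝ) :=
              Real.rpow_le_rpow_of_exponent_le hv1 (by rw [hκ]; norm_num)
          _ = v ^ (-(1 / 2) : ℝ) * v ^ (-(5 / 4) : ℝ) := Real.rpow_add hv0 _ _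
          _ ≤ _ := by gcongr
      calc _ ≤ E * x * (4 * (2 * (v ^ 2)⁻¹)) * (C * v ^ κ) := by gcongr
        _ = 8 * E * C * x * ((v ^ 2)⁻¹ * v ^ κ) := by ring
        _ ≤ 8 * E * C * x * (1 / L ^ 11 * v ^ (-(5 / 4) : ℝ)) := by gcongr
        _ = _ := by ring
    have hm : MeasurableSet (Ioc (-T) T)ᶜ := measurableSet_Ioc.compl
    have hbi := hK0int.const_mul (8 * E * C * (x / L ^ 11))
    calc _ ≤ ∫ t in (Ioc (-T) T)ᶜ, 8 * E * C * (x / L ^ 11) * (1 + ‖t‖) ^ (-(5 / 4) : ℝ) :=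
          norm_integral_le_of_norm_le hbi.integrableOn
            ((ae_restrict_iff' hm).2 (ae_of_all _ hpt))
      _ ≤ ∫ t, 8 * E * C * (x / L ^ 11) * (1 + ‖t‖) ^ (-(5 / 4) : ℝ) :=
          setIntegral_le_integral hbi (ae_of_all _ fun t => by positivity)
      _ = _ := by rw [integral_const_mul, ← hK0, hC1]; ring
  have hsplit : ∫ t : ℝ, f (σ0 + t * I)
      = (∫ y in (-T)..T, f (σ0 + y * I)) + ∫ t in (Ioc (-T) T)ᶜ, f (σ0 + t * I) := by
    rw [intervalIntegral.integral_of_le (by linarith), integral_add_compl measurableSet_Ioc hfint]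
  have hfinal : 2 * Real.pi * |Δ| ≤ (C1 + 2 * C2 + C3) * (x / L ^ 11) := by
    have e : 2 * Real.pi * |Δ| = ‖(2 * Real.pi * (Δ : ℂ) : ℂ)‖ := by
      rw [norm_mul, norm_mul, Complex.norm_real, Complex.norm_real, Real.norm_eq_abs,
        Real.norm_eq_abs, abs_of_pos Real.pi_pos]
      norm_num
    rw [e, ← hval, hsplit]
    refine (norm_add_le _ _).trans ?_
    linarith
  have hpi := Real.pi_gt_three
  nlinarith [abs_nonneg Δ]

/-! ### Primes in short intervals -/

/-- `∑ Λ(n) (x - n)⁺`. -/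
noncomputable def psiOne (x : ℝ) : ℝ :=
  ∑' n : ℕ, ArithmeticFunction.vonMangoldt n * max (x - n) 0

lemma psiOne_eq_sum {x : ℝ} {N : ℕ} (hN : x ≤ N) :
    psiOne x = ∑ n ∈ Finset.Ioc 0 N, ArithmeticFunction.vonMangoldt n * max (x - n) 0 := by
  refine tsum_eq_sum fun n hn => ?_
  rw [Finset.mem_Ioc, not_and_or, not_lt, not_le] at hn
  rcases hn with hn | hn
  · simp [Nat.le_zero.1 hn]
  · have : (N : ℝ) ≤ n := by exact_mod_cast hn.le
    rw [max_eq_right (by linarith), mul_zero]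

lemma exists_psiOne_bound : ∃ C : ℝ, 0 < C ∧ ∀ x : ℝ, Real.exp 1 ≤ x →
    |psiOne x - (x - 1) ^ 2 / 2| ≤ C * (x ^ 2 / Real.log x ^ 11) := by
  obtain ⟨C, hC, h⟩ := exists_smoothed_pnt
  refine ⟨C, hC, fun x hx => ?_⟩
  have hx0 : 0 < x := (Real.exp_pos 1).trans_le hx
  have e : psiOne x - (x - 1) ^ 2 / 2
      = x * ((∑' n : ℕ, ArithmeticFunction.vonMangoldt n * max (1 - n / x) 0)
        - (x - 1) ^ 2 / (2 * x)) := by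
    rw [mul_sub, ← tsum_mul_left, psiOne]
    congr 1
    · refine tsum_congr fun n => ?_
      rw [mul_left_comm, mul_max_of_nonneg _ _ hx0.le, mul_sub, mul_div_cancel₀ _ hx0.ne']
      simp
    · field_simp
  rw [e, abs_mul, abs_of_pos hx0]
  calc _ ≤ x * (C * (x / Real.log x ^ 11)) := by gcongr; exact h x hx
    _ = _ := by ring

/-- The second difference of `psiOne` is a tent-shaped average of `Λ`, hence bounded by an
increment of `ψ`. -/
lemma psiOne_second_difference_le {x k : ℝ} (hx : 0 ≤ x) (hk : 0 ≤ k) :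
    psiOne (x + 2 * k) - 2 * psiOne (x + k) + psiOne x
      ≤ k * (Chebyshev.psi (x + 2 * k) - Chebyshev.psi x) := by
  have hc : x + 2 * k ≤ ((⌊x + 2 * k⌋₊ + 1 : ℕ) : ℝ) := by
    push_cast; exact (Nat.lt_floor_add_one _).le
  set N := ⌊x + 2 * k⌋₊ + 1 with hN
  have hpsi : ∀ y, 0 ≤ y → y ≤ x + 2 * k → Chebyshev.psi y = ∑ n ∈ Finset.Ioc 0 N,
      if (n : ℝ) ≤ y then ArithmeticFunction.vonMangoldt n else 0 := by
    intro y hy0 hy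
    rw [Chebyshev.psi, ← Finset.sum_filter]
    refine Finset.sum_congr ?_ fun _ _ => rfl
    ext n
    simp only [Finset.mem_Ioc, Finset.mem_filter]
    rw [Nat.le_floor_iff hy0]
    constructor
    · rintro ⟨h1, h2⟩
      refine ⟨⟨h1, ?_⟩, h2⟩
      rw [hN]; exact ((Nat.le_floor_iff (by linarith)).2 (h2.trans hy)).trans (Nat.le_succ _)
    · rintro ⟨⟨h1, -⟩, h2⟩; exact ⟨h1, h2⟩
  rw [hpsi _ (by linarith) le_rfl, hpsi x hx (by linarith), psiOne_eq_sum hc,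
    psiOne_eq_sum (by linarith : x + k ≤ N), psiOne_eq_sum (by linarith : x ≤ N),
    Finset.mul_sum, ← Finset.sum_sub_distrib, ← Finset.sum_add_distrib, ← Finset.sum_sub_distrib,
    Finset.mul_sum]
  refine Finset.sum_le_sum fun n _ => ?_
  have hΛ : 0 ≤ ArithmeticFunction.vonMangoldt n := ArithmeticFunction.vonMangoldt_nonneg
  have e1 : ∀ a b : ℝ, (if (n : ℝ) ≤ a then ArithmeticFunction.vonMangoldt n else 0)
      = ArithmeticFunction.vonMangoldt n * (if (n : ℝ) ≤ a then 1 else 0) := by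
    intro a _; split_ifs <;> simp
  rw [e1 _ 0, e1 _ 0]
  have key : max (x + 2 * k - n) 0 - 2 * max (x + k - n) 0 + max (x - n) 0
      ≤ k * ((if (n : ℝ) ≤ x + 2 * k then 1 else 0) - (if (n : ℝ) ≤ x then 1 else 0)) := by
    rcases le_or_gt (n : ℝ) x with h1 | h1
    · rw [if_pos h1, if_pos (by linarith), max_eq_left (by linarith), max_eq_left (by linarith),
        max_eq_left (by linarith)]
      linarith
    · rw [if_neg (not_le.2 h1), max_eq_right (by linarith : x - n ≤ 0)]
      rcases le_or_gt (n : ℝ) (x + 2 * k) with h2 | h2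
      · rw [if_pos h2, max_eq_left (by linarith)]
        rcases le_total (x + k - n) 0 with h3 | h3
        · rw [max_eq_right h3]; linarith
        · rw [max_eq_left h3]; linarith
      · rw [if_neg (not_le.2 h2), max_eq_right (by linarith), max_eq_right (by linarith)]
        linarith
  nlinarith [mul_le_mul_of_nonneg_left key hΛ]

/-- Intervals `(x, x + h]` with `x / (log x) ^ 5 ≤ h ≤ x` contain a positive proportion of the
expected mass of primes: a second difference of `psiOne` with step `h / 2` loses two factors
`(log x) ^ 5` against the saving of eleven logarithms. -/
lemma eventually_theta_sub_ge : ∃ X : ℝ, ∀ x : ℝ, X ≤ x → ∀ h : ℝ, x / Real.log x ^ 5 ≤ h → h ≤ x →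
    h / 4 ≤ Chebyshev.theta (x + h) - Chebyshev.theta x := by
  obtain ⟨C, hC, hpsi⟩ := exists_psiOne_bound
  obtain ⟨D, hD⟩ := Chebyshev.psi_sub_theta_le_mul_sqrt
  have hev1 : ∀ᶠ x : ℝ in atTop, 256 * C + 1 ≤ Real.log x :=
    Real.tendsto_log_atTop.eventually_ge_atTop _
  have hev2 : ∀ᶠ x : ℝ in atTop, (2 * |D| * 8) * Real.log x ^ 5 ≤ Real.sqrt x := by
    have h : (fun x : ℝ => Real.log x ^ 5) =o[atTop] fun x => x ^ (1 / 2 : ℝ) := by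
      have := isLittleO_log_rpow_rpow_atTop 5 (show (0 : ℝ) < 1 / 2 by norm_num)
      refine this.congr_left fun x => ?_
      exact_mod_cast Real.rpow_natCast (Real.log x) 5
    have := h.bound (c := 1 / (2 * |D| * 8 + 1)) (by positivity)
    filter_upwards [this, eventually_ge_atTop 1] with x hx hx1
    have hl : 0 ≤ Real.log x := Real.log_nonneg hx1
    rw [Real.norm_of_nonneg (by positivity), Real.norm_of_nonneg (by positivity),
      one_div_mul_eq_div, le_div_iff₀ (by positivity), ← Real.sqrt_eq_rpow] at hx
    have : 0 ≤ Real.log x ^ 5 := by positivity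
    linarith
  obtain ⟨X, hX⟩ := eventually_atTop.1
    ((hev1.and hev2).and (eventually_ge_atTop (Real.exp 1)))
  refine ⟨X, fun x hx h hh1 hh2 => ?_⟩
  obtain ⟨⟨a1, a2⟩, a3⟩ := hX x hx
  have hx0 : 0 < x := (Real.exp_pos 1).trans_le a3
  set L := Real.log x with hL
  have hL1 : 1 ≤ L := by rw [hL, Real.le_log_iff_exp_le hx0]; exact a3
  have hL0 : 0 < L := by linarith
  have hh0 : 0 < h := lt_of_lt_of_le (by positivity) hh1
  set k := h / 2 with hk
  have hk0 : 0 < k := by positivity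
  have hb : ∀ y, x ≤ y → y ≤ 2 * x → |psiOne y - (y - 1) ^ 2 / 2| ≤ 4 * C * (x ^ 2 / L ^ 11) := by
    intro y h1 h2
    refine (hpsi y (a3.trans h1)).trans ?_
    have : L ≤ Real.log y := Real.log_le_log hx0 h1
    calc C * (y ^ 2 / Real.log y ^ 11) ≤ C * ((2 * x) ^ 2 / L ^ 11) := by
          have hy0 : 0 ≤ y := by linarith
          gcongr
      _ = _ := by ring
  have b0 := abs_le.1 (hb x le_rfl (by linarith))
  have b1 := abs_le.1 (hb (x + k) (by linarith) (by linarith))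
  have b2 := abs_le.1 (hb (x + 2 * k) (by linarith) (by linarith))
  have hsd := psiOne_second_difference_le hx0.le hk0.le
  have hkh : x + 2 * k = x + h := by rw [hk]; ring
  have hmain : k ^ 2 - 16 * C * (x ^ 2 / L ^ 11) ≤ k * (Chebyshev.psi (x + h) - Chebyshev.psi x) := by
    rw [← hkh]
    refine le_trans ?_ hsd
    nlinarith
  have hxL : x ^ 2 / L ^ 11 ≤ k * (4 * k) / L := by
    have : x ≤ 2 * k * L ^ 5 := by
      rw [div_le_iff₀ (by positivity)] at hh1
      rw [hk]; linarith
    rw [div_le_div_iff₀ (by positivity) hL0]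
    calc x ^ 2 * L ≤ (2 * k * L ^ 5) ^ 2 * L := by gcongr
      _ = _ := by ring
  have hpsid : k * (3 / 4) ≤ Chebyshev.psi (x + h) - Chebyshev.psi x := by
    have h1 : 16 * C * (x ^ 2 / L ^ 11) ≤ k * (k / 4) := by
      calc _ ≤ 16 * C * (k * (4 * k) / L) := by gcongr
        _ = k * k * (64 * C / L) := by ring
        _ ≤ k * k * (1 / 4) := by
          refine mul_le_mul_of_nonneg_left ?_ (by positivity)
          rw [div_le_div_iff₀ hL0 (by norm_num)]; linarith
        _ = _ := by ring
    have h2 : k * (k * (3 / 4)) ≤ k * (Chebyshev.psi (x + h) - Chebyshev.psi x) := by nlinarith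
    exact le_of_mul_le_mul_left h2 hk0
  have ht1 := Chebyshev.theta_le_psi x
  have ht2 := hD (x + h)
  have hsq : D * Real.sqrt (x + h) ≤ h / 8 := by
    have s1 : Real.sqrt (x + h) ≤ 2 * Real.sqrt x := by
      rw [Real.sqrt_le_left (by positivity), mul_pow, Real.sq_sqrt hx0.le]; linarith
    have s2 : x = Real.sqrt x * Real.sqrt x := (Real.mul_self_sqrt hx0.le).symm
    have s3 : 2 * |D| * 8 * Real.sqrt x ≤ h := by
      refine le_trans ?_ hh1
      rw [le_div_iff₀ (by positivity)]
      calc _ = (2 * |D| * 8 * L ^ 5) * Real.sqrt x := by ring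
        _ ≤ Real.sqrt x * Real.sqrt x := by gcongr
        _ = x := s2.symm
    calc D * Real.sqrt (x + h) ≤ |D| * (2 * Real.sqrt x) := by
          gcongr; exact le_abs_self D
      _ ≤ _ := by linarith
  rw [hk] at hpsid
  linarith

/-! ### Markov's inequality for polynomials -/

open Polynomial in
/-- Markov's inequality at the right end point. -/
lemma abs_derivative_eval_one_le {m : ℕ} {Q : ℝ[X]} (hQ : Q.natDegree ≤ m) {M : ℝ} (hM : 0 < M)
    (hb : ∀ y ∈ Icc (-1 : ℝ) 1, |Q.eval y| ≤ M) : |(derivative Q).eval 1| ≤ m ^ 2 * M := by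
  have key : ∀ c : ℝ, |c| = M⁻¹ → c * (derivative Q).eval 1 ≤ m ^ 2 := by
    intro c hc
    have h := Polynomial.Chebyshev.eval_iterate_derivative_le_of_forall_abs_le_one (n := m)
      (P := C c * Q) (k := 1) (x := 1) le_rfl
      (natDegree_le_iff_degree_le.1 ((natDegree_C_mul_le c Q).trans hQ)) (by
        intro y hy
        rw [eval_C_mul, abs_mul, hc, inv_mul_le_iff₀ hM, mul_one]
        exact hb y hy)
    simpa [Polynomial.Chebyshev.derivative_T_eval_one] using h
  have h1 := key M⁻¹ (abs_of_pos (by positivity))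
  have h2 := key (-M⁻¹) (by rw [abs_neg, abs_of_pos (by positivity)])
  rw [inv_mul_le_iff₀ hM] at h1
  rw [neg_mul, ← mul_neg, inv_mul_le_iff₀ hM] at h2
  rw [abs_le]
  constructor <;> linarith

open Polynomial in
lemma abs_derivative_eval_le_of_half_le {m : ℕ} {P : ℝ[X]} (hP : P.natDegree ≤ m) {M : ℝ}
    (hM : 0 < M) (hb : ∀ v ∈ Icc (0 : ℝ) 1, |P.eval v| ≤ M) {v : ℝ} (hv : 1 / 2 ≤ v) (hv1 : v ≤ 1) :
    |(derivative P).eval v| ≤ 4 * m ^ 2 * M := by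
  -- rescale so that `[0, v]` becomes `[-1, 1]`
  set Q := P.comp (C (v / 2) * (X + C 1)) with hQ
  have hdeg : Q.natDegree ≤ m := by
    refine (natDegree_comp_le).trans ?_
    have : (C (v / 2) * (X + C (1 : ℝ))).natDegree ≤ 1 := by
      refine (natDegree_C_mul_le _ _).trans ?_
      rw [natDegree_X_add_C]
    nlinarith
  have h := abs_derivative_eval_one_le hdeg hM (by
    intro y hy
    rw [hQ, eval_comp]
    refine hb _ ?_
    simp only [eval_mul, eval_C, eval_add, eval_X]
    constructor <;> nlinarith [hy.1, hy.2])
  have e : (derivative Q).eval 1 = v / 2 * (derivative P).eval v := by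
    rw [hQ, derivative_comp]
    simp only [derivative_mul, derivative_C, derivative_add, derivative_X, eval_mul, eval_comp,
      eval_add, eval_C, eval_X, zero_mul, zero_add, add_zero, mul_one]
    norm_num
  rw [e, abs_mul, abs_of_pos (by linarith)] at h
  nlinarith [abs_nonneg ((derivative P).eval v)]

open Polynomial in
/-- Markov's inequality on `[0, 1]`, with the constant `4 m²`. -/
lemma abs_derivative_eval_le {m : ℕ} {P : ℝ[X]} (hP : P.natDegree ≤ m) {M : ℝ}
    (hM : 0 < M) (hb : ∀ v ∈ Icc (0 : ℝ) 1, |P.eval v| ≤ M) {v : ℝ} (hv : v ∈ Icc (0 : ℝ) 1) :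
    |(derivative P).eval v| ≤ 4 * m ^ 2 * M := by
  rcases le_total (1 / 2) v with h | h
  · exact abs_derivative_eval_le_of_half_le hP hM hb h hv.2
  · have hdeg : (P.comp (C 1 - X)).natDegree ≤ m := by
      refine (natDegree_comp_le).trans ?_
      have : (C (1 : ℝ) - X).natDegree ≤ 1 := by
        refine (natDegree_sub_le _ _).trans ?_
        simp
      nlinarith
    have := abs_derivative_eval_le_of_half_le hdeg hM (by
      intro y hy
      rw [eval_comp]
      refine hb _ ?_
      simp only [eval_sub, eval_C, eval_X]
      constructor <;> linarith [hy.1, hy.2]) (v := 1 - v) (by linarith) (by linarith [hv.1])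
    rw [derivative_comp] at this
    simpa using this

open Polynomial in
/-- A polynomial of degree at most `m` is Lipschitz on `[0, 1]` with a constant that is a multiple
of its mean absolute value. -/
lemma exists_lipschitz_integral {m : ℕ} (hm : 1 ≤ m) {P : ℝ[X]} (hP : P.natDegree ≤ m) {v w : ℝ}
    (hv : v ∈ Icc (0 : ℝ) 1) (hw : w ∈ Icc (0 : ℝ) 1) :
    |P.eval v - P.eval w| ≤ 64 * m ^ 4 * (∫ t in (0 : ℝ)..1, |P.eval t|) * |v - w| := by
  have hcont : Continuous fun t : ℝ => |P.eval t| := P.continuous.abs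
  obtain ⟨v0, hv0, hmax⟩ := (isCompact_Icc (a := (0 : ℝ)) (b := 1)).exists_isMaxOn
    (nonempty_Icc.2 zero_le_one) hcont.continuousOn
  set M := |P.eval v0| with hMdef
  have hb : ∀ t ∈ Icc (0 : ℝ) 1, |P.eval t| ≤ M := fun t ht => hmax ht
  have hI0 : 0 ≤ ∫ t in (0 : ℝ)..1, |P.eval t| :=
    intervalIntegral.integral_nonneg zero_le_one fun t _ => abs_nonneg _
  rcases (abs_nonneg (P.eval v0)).eq_or_lt with h0 | hM
  · have hv' : P.eval v = 0 := abs_nonpos_iff.1 ((hb v hv).trans (by rw [hMdef, ← h0]))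
    have hw' : P.eval w = 0 := abs_nonpos_iff.1 ((hb w hw).trans (by rw [hMdef, ← h0]))
    rw [hv', hw', sub_zero, abs_zero]
    positivity
  · rw [← hMdef] at hM
    set K : ℝ := 4 * m ^ 2 with hK
    have hm' : (1 : ℝ) ≤ m := by exact_mod_cast hm
    have hK1 : 1 ≤ K := by rw [hK]; nlinarith
    have hlip : ∀ a ∈ Icc (0 : ℝ) 1, ∀ b ∈ Icc (0 : ℝ) 1,
        |P.eval a - P.eval b| ≤ K * M * |a - b| := by
      intro a ha b hb'
      have := (convex_Icc (0 : ℝ) 1).norm_image_sub_le_of_norm_deriv_le (𝕜 := ℝ)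
        (f := fun t => P.eval t) (C := K * M) (fun t _ => P.differentiable t)
        (fun t ht => by
          rw [Polynomial.deriv, Real.norm_eq_abs]
          exact abs_derivative_eval_le hP hM hb ht) hb' ha
      simpa [Real.norm_eq_abs] using this
    -- an interval of length `1 / (2K)` around the maximum, on which `|P| ≥ M / 2`
    have hsub : ∃ a b : ℝ, 0 ≤ a ∧ b ≤ 1 ∧ b - a = 1 / (2 * K) ∧
        ∀ t ∈ Icc a b, |t - v0| ≤ 1 / (2 * K) := by
      have h2K : 1 / (2 * K) ≤ 1 / 2 := by
        apply one_div_le_one_div_of_le <;> linarith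
      have h2K0 : 0 < 1 / (2 * K) := by positivity
      rcases le_total v0 (1 / 2) with h | h
      · refine ⟨v0, v0 + 1 / (2 * K), hv0.1, by linarith, by ring, fun t ht => ?_⟩
        rw [abs_le]; constructor <;> linarith [ht.1, ht.2]
      · refine ⟨v0 - 1 / (2 * K), v0, by linarith, hv0.2, by ring, fun t ht => ?_⟩
        rw [abs_le]; constructor <;> linarith [ht.1, ht.2]
    obtain ⟨a, b, ha, hb1, hab, hclose⟩ := hsub
    have hab' : a ≤ b := by
      have : 0 < 1 / (2 * K) := by positivity
      linarith
    have hlow : ∀ t ∈ Icc a b, M / 2 ≤ |P.eval t| := by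
      intro t ht
      have h1 := hlip v0 hv0 t ⟨ha.trans ht.1, ht.2.trans hb1⟩
      have h2 : K * M * |v0 - t| ≤ M / 2 := by
        calc K * M * |v0 - t| ≤ K * M * (1 / (2 * K)) := by
              rw [abs_sub_comm]; gcongr; exact hclose t ht
          _ = M / 2 := by field_simp
      have h3 := abs_sub_abs_le_abs_sub (P.eval v0) (P.eval t)
      rw [← hMdef] at h3
      linarith
    have hfint : M ≤ 4 * K * ∫ t in (0 : ℝ)..1, |P.eval t| := by
      have h1 : ∫ t in a..b, (M / 2) ≤ ∫ t in a..b, |P.eval t| :=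
        intervalIntegral.integral_mono_on hab' intervalIntegrable_const
          (hcont.intervalIntegrable _ _) hlow
      have h2 : ∫ t in a..b, |P.eval t| ≤ ∫ t in (0 : ℝ)..1, |P.eval t| :=
        intervalIntegral.integral_mono_interval ha hab' hb1
          (ae_of_all _ fun t => abs_nonneg _) (hcont.intervalIntegrable _ _)
      rw [intervalIntegral.integral_const, smul_eq_mul, hab] at h1
      have h3 : M = 4 * K * (1 / (2 * K) * (M / 2)) := by field_simp; norm_num
      rw [h3]
      gcongr
      linarith
    refine (hlip v hv w hw).trans ?_
    refine mul_le_mul_of_nonneg_right ?_ (abs_nonneg _)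
    calc K * M ≤ K * (4 * K * ∫ t in (0 : ℝ)..1, |P.eval t|) := by gcongr
      _ = _ := by rw [hK]; ring

/-! ### Moment matching by weights on the primes of a block -/

/-- The primes in `(a, b]`. -/
noncomputable def primesIoc (a b : ℝ) : Finset ℕ :=
  (Finset.Ioc ⌊a⌋₊ ⌊b⌋₊).filter Nat.Prime

lemma mem_primesIoc {a b : ℝ} (ha : 0 ≤ a) (hb : 0 ≤ b) {p : ℕ} :
    p ∈ primesIoc a b ↔ p.Prime ∧ a < p ∧ (p : ℝ) ≤ b := by
  rw [primesIoc, Finset.mem_filter, Finset.mem_Ioc, Nat.floor_lt ha, Nat.le_floor_iff hb]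
  tauto

lemma sum_primesIoc_add {E : Type*} [AddCommMonoid E] (f : ℕ → E) {a b c : ℝ} (hab : a ≤ b)
    (hbc : b ≤ c) :
    (∑ p ∈ primesIoc a b, f p) + ∑ p ∈ primesIoc b c, f p = ∑ p ∈ primesIoc a c, f p := by
  simp only [primesIoc, Finset.sum_filter]
  exact Finset.sum_Ioc_consecutive _ (Nat.floor_mono hab) (Nat.floor_mono hbc)

lemma sum_primesIoc_telescope {E : Type*} [AddCommMonoid E] (f : ℕ → E) {y : ℕ → ℝ}
    (hy : Monotone y) (N : ℕ) :
    ∑ i ∈ Finset.range N, ∑ p ∈ primesIoc (y i) (y (i + 1)), f p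
      = ∑ p ∈ primesIoc (y 0) (y N), f p := by
  induction N with
  | zero => simp [primesIoc]
  | succ n ih =>
    rw [Finset.sum_range_succ, ih, sum_primesIoc_add f (hy (Nat.zero_le _)) (hy (Nat.le_succ _))]

lemma theta_sub_theta {a b : ℝ} (hab : a ≤ b) :
    Chebyshev.theta b - Chebyshev.theta a = ∑ p ∈ primesIoc a b, Real.log p := by
  rw [sub_eq_iff_eq_add', Chebyshev.theta, Chebyshev.theta, primesIoc]
  simp only [Finset.sum_filter]
  exact (Finset.sum_Ioc_consecutive _ (Nat.zero_le _) (Nat.floor_mono hab)).symm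

/-- The primes whose logarithm lies in `(m, m + 1]`. -/
noncomputable def blockPrimes (m : ℕ) : Finset ℕ := primesIoc (Real.exp m) (Real.exp (m + 1))

lemma mem_blockPrimes {m p : ℕ} : p ∈ blockPrimes m ↔
    p.Prime ∧ (m : ℝ) < Real.log p ∧ Real.log p ≤ m + 1 := by
  rw [blockPrimes, mem_primesIoc (Real.exp_pos _).le (Real.exp_pos _).le]
  refine and_congr_right fun hp => ?_
  have : (0 : ℝ) < p := by exact_mod_cast hp.pos
  rw [Real.lt_log_iff_exp_lt this, Real.log_le_iff_le_exp this]

/-- The logarithms of the primes of a block sample polynomials of low degree: the weighted `ℓ¹`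
norm over the block dominates the `L¹` norm. -/
lemma exists_sampling : ∃ m₀ : ℕ, 1 ≤ m₀ ∧ ∀ m : ℕ, m₀ ≤ m → ∀ P : Polynomial ℝ,
    P.natDegree ≤ m → Real.exp m / 8 * (∫ t in (0 : ℝ)..1, |P.eval t|)
      ≤ ∑ p ∈ blockPrimes m, Real.log p * |P.eval (Real.log p - m)| := by
  obtain ⟨X, hX⟩ := eventually_theta_sub_ge
  obtain ⟨m₁, hm₁⟩ := eventually_atTop.1
    ((Real.tendsto_exp_atTop.comp tendsto_natCast_atTop_atTop).eventually_ge_atTop X)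
  refine ⟨max m₁ 128, le_max_of_le_right (by norm_num), fun m hm P hP => ?_⟩
  have hm1 : m₁ ≤ m := (le_max_left _ _).trans hm
  have hm2 : 128 ≤ m := (le_max_right _ _).trans hm
  have hmR : (128 : ℝ) ≤ m := by exact_mod_cast hm2
  have hcont : Continuous fun t : ℝ => |P.eval t| := P.continuous.abs
  set J := ∫ t in (0 : ℝ)..1, |P.eval t| with hJ
  have hJ0 : 0 ≤ J := intervalIntegral.integral_nonneg zero_le_one fun t _ => abs_nonneg _
  set N : ℕ := 128 * m ^ 4 with hN
  have hNpos : 0 < N := by positivity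
  have hNR : (0 : ℝ) < N := by exact_mod_cast hNpos
  have hNcast : (N : ℝ) = 128 * m ^ 4 := by rw [hN]; push_cast; ring
  set y : ℕ → ℝ := fun i => Real.exp (m + i / N) with hy
  have hymono : Monotone y := by
    intro i j hij
    simp only [hy]
    gcongr
  have hyN : y N = Real.exp (m + 1) := by simp only [hy]; rw [div_self hNR.ne']
  have hy0 : y 0 = Real.exp m := by simp [hy]
  -- The `N` cells have logarithmic length `1 / N ≥ m ^ (-5)`, long enough for the short interval
  -- estimate, and `N` is large enough for `P` to oscillate by at most half the mean of `|P|` on a cell.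
  have hW : ∀ i < N, Real.exp m / (4 * N) ≤ ∑ p ∈ primesIoc (y i) (y (i + 1)), Real.log p := by
    intro i hi
    have hyi : Real.exp m ≤ y i := by rw [← hy0]; exact hymono (Nat.zero_le _)
    have hyi0 : 0 < y i := Real.exp_pos _
    set h := y i * (Real.exp (1 / N) - 1) with hh
    have hyh : y i + h = y (i + 1) := by
      rw [hh, hy]
      simp only
      rw [show (m : ℝ) + ((i + 1 : ℕ) : ℝ) / N = (m + i / N) + 1 / N by push_cast; ring,
        Real.exp_add (m + i / N)]
      ring
    have h1N : 1 / (N : ℝ) ≤ 1 / 2 := by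
      apply one_div_le_one_div_of_le (by norm_num)
      have : 2 ≤ N := by rw [hN]; nlinarith [Nat.one_le_pow 4 m (by omega)]
      exact_mod_cast this
    have e1 : 1 / (N : ℝ) ≤ Real.exp (1 / N) - 1 := by
      have := Real.add_one_le_exp (1 / (N : ℝ)); linarith
    have e2 : Real.exp (1 / N) - 1 ≤ 1 := by
      have h0 : Real.exp (1 / N) ≤ Real.exp (1 / 2) := Real.exp_le_exp.2 h1N
      have h1 : Real.exp (1 / 2) ^ 2 = Real.exp 1 := by rw [← Real.exp_nat_mul]; norm_num
      have h2 := Real.exp_one_lt_d9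
      nlinarith [Real.exp_pos (1 / 2)]
    have hlog : Real.log (y i) = m + i / N := Real.log_exp _
    have hlog' : (m : ℝ) ≤ Real.log (y i) := by
      rw [hlog]; have : (0 : ℝ) ≤ i / N := by positivity
      linarith
    have hlow : y i / Real.log (y i) ^ 5 ≤ h := by
      rw [hh, div_eq_mul_inv]
      refine mul_le_mul_of_nonneg_left (le_trans ?_ e1) hyi0.le
      rw [one_div]
      refine inv_anti₀ hNR ?_
      calc (N : ℝ) = 128 * m ^ 4 := hNcast
        _ ≤ m * m ^ 4 := by gcongr
        _ = m ^ 5 := by ring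
        _ ≤ _ := by gcongr
    have := hX (y i) ((hm₁ m hm1).trans hyi) h hlow (by rw [hh]; nlinarith)
    rw [hyh, theta_sub_theta (hymono (Nat.le_succ i))] at this
    refine le_trans ?_ this
    calc Real.exp m / (4 * N) = Real.exp m * (1 / N) / 4 := by field_simp
      _ ≤ h / 4 := by rw [hh]; gcongr
  set c : ℕ → ℝ := fun i => (i : ℝ) / N with hc
  have hcell : ∀ i < N, Real.exp m / (4 * N) *
      (N * (∫ t in c i..c (i + 1), |P.eval t|) - J / 2)
      ≤ ∑ p ∈ primesIoc (y i) (y (i + 1)), Real.log p * |P.eval (Real.log p - m)| := by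
    intro i hi
    set A := N * (∫ t in c i..c (i + 1), |P.eval t|) - J / 2 with hA
    have hlen : c (i + 1) - c i = 1 / N := by simp only [hc]; push_cast; ring
    have hci0 : 0 ≤ c i := by simp only [hc]; positivity
    have hci1 : c (i + 1) ≤ 1 := by
      simp only [hc]; rw [div_le_one hNR]; exact_mod_cast hi
    have hcle : c i ≤ c (i + 1) := by
      have : 0 < 1 / (N : ℝ) := by positivity
      linarith
    have hpt : ∀ p ∈ primesIoc (y i) (y (i + 1)), A ≤ |P.eval (Real.log p - m)| ∧ 0 ≤ Real.log p := by
      intro p hp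
      rw [mem_primesIoc (Real.exp_pos _).le (Real.exp_pos _).le] at hp
      obtain ⟨hp1, hp2, hp3⟩ := hp
      have hp0 : (0 : ℝ) < p := by exact_mod_cast hp1.pos
      rw [← Real.lt_log_iff_exp_lt hp0] at hp2
      rw [← Real.log_le_iff_le_exp hp0] at hp3
      refine ⟨?_, Real.log_nonneg (by exact_mod_cast hp1.one_le)⟩
      set v := Real.log p - m with hv
      have hv1 : c i ≤ v := by simp only [hc]; linarith
      have hv2 : v ≤ c (i + 1) := by simp only [hc]; linarith
      have hvar : ∀ t ∈ Icc (c i) (c (i + 1)), |P.eval t| ≤ |P.eval v| + J / 2 := by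
        intro t ht
        have := exists_lipschitz_integral (m := m) (by omega) hP (v := t) (w := v)
          ⟨hci0.trans ht.1, ht.2.trans hci1⟩ ⟨hci0.trans hv1, hv2.trans hci1⟩
        rw [← hJ] at this
        have h2 : |t - v| ≤ 1 / N := by
          rw [abs_le]; constructor <;> linarith [ht.1, ht.2]
        have h3 : 64 * m ^ 4 * J * |t - v| ≤ J / 2 := by
          calc 64 * m ^ 4 * J * |t - v| ≤ 64 * m ^ 4 * J * (1 / N) := by gcongr
            _ = J / 2 := by rw [hNcast]; field_simp; ring
        have h4 := abs_sub_abs_le_abs_sub (P.eval t) (P.eval v)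
        linarith
      have hfint : ∫ t in c i..c (i + 1), |P.eval t| ≤ ∫ t in c i..c (i + 1), (|P.eval v| + J / 2) :=
        intervalIntegral.integral_mono_on hcle (hcont.intervalIntegrable _ _)
          intervalIntegrable_const hvar
      rw [intervalIntegral.integral_const, smul_eq_mul, hlen, one_div_mul_eq_div,
        le_div_iff₀ hNR] at hfint
      rw [hA]; linarith
    rcases le_total A 0 with hA0 | hA0
    · refine le_trans (mul_nonpos_of_nonneg_of_nonpos (by positivity) hA0) ?_
      exact Finset.sum_nonneg fun p hp => mul_nonneg (hpt p hp).2 (abs_nonneg _)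
    · calc _ ≤ (∑ p ∈ primesIoc (y i) (y (i + 1)), Real.log p) * A := by
            gcongr; exact hW i hi
        _ = ∑ p ∈ primesIoc (y i) (y (i + 1)), Real.log p * A := Finset.sum_mul _ _ _
        _ ≤ _ := Finset.sum_le_sum fun p hp =>
            mul_le_mul_of_nonneg_left (hpt p hp).1 (hpt p hp).2
  have hsumI : ∑ i ∈ Finset.range N, ∫ t in c i..c (i + 1), |P.eval t| = J := by
    rw [intervalIntegral.sum_integral_adjacent_intervals
      fun i _ => hcont.intervalIntegrable _ _]
    simp only [hc]
    rw [div_self hNR.ne', Nat.cast_zero, zero_div]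
  have htel := sum_primesIoc_telescope
    (fun p : ℕ => Real.log p * |P.eval (Real.log p - m)|) hymono N
  rw [hy0, hyN] at htel
  rw [blockPrimes, ← htel]
  refine le_trans (le_of_eq ?_) (Finset.sum_le_sum fun i hi => hcell i (Finset.mem_range.1 hi))
  rw [← Finset.mul_sum, Finset.sum_sub_distrib, ← Finset.mul_sum, hsumI, Finset.sum_const,
    Finset.card_range, nsmul_eq_mul]
  field_simp
  ring

/-- Duality: a finite moment problem with weights in `[-1/4, 1/4]` is solvable as soon as the
corresponding linear functional on polynomials is dominated by the weighted `ℓ¹` norm. -/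
lemma exists_weights (S : Finset ℕ) (w v : ℕ → ℝ) (m : ℕ) (b : ℕ → ℝ)
    (h : ∀ P : Polynomial ℝ, P.natDegree ≤ m → ∑ j ∈ Finset.range (m + 1), P.coeff j * b j
      ≤ 1 / 4 * ∑ p ∈ S, w p * |P.eval (v p)|) :
    ∃ u : ℕ → ℝ, (∀ p, |u p| ≤ 1 / 4) ∧
      ∀ j ≤ m, ∑ p ∈ S, u p * (w p * v p ^ j) = b j := by
  set Φ : (ℕ → ℝ) → (Fin (m + 1) → ℝ) := fun u j => ∑ p ∈ S, u p * (w p * v p ^ (j : ℕ)) with hΦ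
  set Q : Set (ℕ → ℝ) := Set.pi univ fun _ => Icc (-(1 / 4)) (1 / 4) with hQ
  have hQc : IsCompact Q := isCompact_univ_pi fun _ => isCompact_Icc
  have hΦc : Continuous Φ := by
    refine continuous_pi fun j => ?_
    exact continuous_finsetSum _ fun p _ => (continuous_apply p).mul continuous_const
  have hΦconv : Convex ℝ (Φ '' Q) := by
    have hl : IsLinearMap ℝ Φ := by
      constructor
      · intro x y; ext j; simp [hΦ, add_mul, Finset.sum_add_distrib]
      · intro c x; ext j; simp [hΦ, Finset.mul_sum, mul_assoc]
    exact (convex_pi fun _ _ => convex_Icc _ _).is_linear_image hl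
  have hclosed : IsClosed (Φ '' Q) := (hQc.image hΦc).isClosed
  by_cases hmem : (fun j : Fin (m + 1) => b j) ∈ Φ '' Q
  · obtain ⟨u, hu, hub⟩ := hmem
    refine ⟨u, fun p => abs_le.2 (hu p (mem_univ _)), fun j hj => ?_⟩
    exact congrFun hub ⟨j, Nat.lt_succ_of_le hj⟩
  · exfalso
    obtain ⟨f, r, hf1, hf2⟩ := geometric_hahn_banach_closed_point hΦconv hclosed hmem
    set a : ℕ → ℝ := fun j => if hj : j < m + 1 then f (Pi.single ⟨j, hj⟩ 1) else 0 with ha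
    have hfx : ∀ x : Fin (m + 1) → ℝ, f x = ∑ j : Fin (m + 1), a j * x j := by
      intro x
      conv_lhs => rw [← Finset.univ_sum_single x]
      rw [map_sum]
      refine Finset.sum_congr rfl fun j _ => ?_
      have : Pi.single j (x j) = x j • (Pi.single j 1 : Fin (m + 1) → ℝ) := by
        rw [← Pi.single_smul]; simp
      rw [this, map_smul, smul_eq_mul, mul_comm]
      simp only [ha]
      rw [dif_pos j.2]
    set P : Polynomial ℝ := ∑ j ∈ Finset.range (m + 1), Polynomial.monomial j (a j) with hP
    have hPdeg : P.natDegree ≤ m := by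
      refine Polynomial.natDegree_sum_le_of_forall_le _ _ fun j hj => ?_
      exact (Polynomial.natDegree_monomial_le _).trans
        (Nat.lt_succ_iff.1 (Finset.mem_range.1 hj))
    have hPcoeff : ∀ j < m + 1, P.coeff j = a j := by
      intro j hj
      rw [hP, Polynomial.finsetSum_coeff]
      simp [Polynomial.coeff_monomial, hj]
    have hPeval : ∀ t, P.eval t = ∑ j ∈ Finset.range (m + 1), a j * t ^ j := by
      intro t
      rw [hP, Polynomial.eval_finsetSum]
      simp
    have hfb : f (fun j : Fin (m + 1) => b j) ≤ 1 / 4 * ∑ p ∈ S, w p * |P.eval (v p)| := by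
      rw [hfx, Fin.sum_univ_eq_sum_range fun j => a j * b j]
      refine le_trans (le_of_eq ?_) (h P hPdeg)
      exact Finset.sum_congr rfl fun j hj => by rw [hPcoeff j (Finset.mem_range.1 hj)]
    -- The weights `u p = ± 1/4` aligned with the signs of `P (v p)` maximise the separating
    -- functional and attain the right-hand side of the hypothesis.
    set u : ℕ → ℝ := fun p => if 0 ≤ P.eval (v p) then 1 / 4 else -(1 / 4) with hu
    have huQ : u ∈ Q := by
      intro p _
      simp only [hu]
      split_ifs <;> constructor <;> norm_num
    have hfu : f (Φ u) = 1 / 4 * ∑ p ∈ S, w p * |P.eval (v p)| := by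
      rw [hfx, Fin.sum_univ_eq_sum_range fun j => a j * ∑ p ∈ S, u p * (w p * v p ^ j)]
      simp_rw [Finset.mul_sum]
      rw [Finset.sum_comm]
      refine Finset.sum_congr rfl fun p _ => ?_
      have : u p * P.eval (v p) = 1 / 4 * |P.eval (v p)| := by
        simp only [hu]
        split_ifs with h0
        · rw [abs_of_nonneg h0]
        · rw [abs_of_neg (not_le.1 h0)]; ring
      calc _ = w p * (u p * ∑ j ∈ Finset.range (m + 1), a j * v p ^ j) := by
            rw [Finset.mul_sum, Finset.mul_sum]
            exact Finset.sum_congr rfl fun j _ => by ring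
        _ = _ := by rw [← hPeval, this]; ring
    have := hf1 _ ⟨u, huQ, rfl⟩
    linarith

/-- On all far enough blocks, the moments of a small function are matched by prime weights. -/
lemma exists_block_weights : ∃ m₀ : ℕ, ∀ m : ℕ, m₀ ≤ m → ∀ g : ℝ → ℝ,
    ContinuousOn g (Icc 0 1) → (∀ t ∈ Icc (0 : ℝ) 1, |g t| ≤ Real.exp m / 32) →
    ∃ u : ℕ → ℝ, (∀ p, |u p| ≤ 1 / 4) ∧ ∀ j ≤ m,
      ∑ p ∈ blockPrimes m, u p * (Real.log p * (Real.log p - m) ^ j)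
        = ∫ t in (0 : ℝ)..1, g t * t ^ j := by
  obtain ⟨m₀, -, hs⟩ := exists_sampling
  refine ⟨m₀, fun m hm g hg hgb => ?_⟩
  refine exists_weights (blockPrimes m) (fun p => Real.log p) (fun p => Real.log p - m) m
    (fun j => ∫ t in (0 : ℝ)..1, g t * t ^ j) fun P hP => ?_
  have hgi : ∀ f : ℝ → ℝ, Continuous f → IntervalIntegrable (fun t => g t * f t) volume 0 1 := by
    intro f hf
    refine ContinuousOn.intervalIntegrable ?_
    rw [uIcc_of_le zero_le_one]
    exact hg.mul hf.continuousOn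
  have e : ∑ j ∈ Finset.range (m + 1), P.coeff j * ∫ t in (0 : ℝ)..1, g t * t ^ j
      = ∫ t in (0 : ℝ)..1, g t * P.eval t := by
    simp_rw [← intervalIntegral.integral_const_mul]
    rw [← intervalIntegral.integral_finsetSum fun j _ => (hgi _ (by fun_prop)).const_mul _]
    congr 1
    ext t
    rw [Polynomial.eval_eq_sum_range' (Nat.lt_succ_of_le hP), Finset.mul_sum]
    exact Finset.sum_congr rfl fun j _ => by ring
  rw [e]
  calc ∫ t in (0 : ℝ)..1, g t * P.eval t
      ≤ ∫ t in (0 : ℝ)..1, Real.exp m / 32 * |P.eval t| := by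
        refine intervalIntegral.integral_mono_on zero_le_one (hgi _ P.continuous)
          ((P.continuous.abs.const_mul _).intervalIntegrable _ _) fun t ht => ?_
        refine (le_abs_self _).trans ?_
        rw [abs_mul]
        gcongr
        exact hgb t ht
    _ = 1 / 4 * (Real.exp m / 8 * ∫ t in (0 : ℝ)..1, |P.eval t|) := by
        rw [intervalIntegral.integral_const_mul]; ring
    _ ≤ _ := by gcongr; exact hs m hm P hP

/-! ### Greedy rounding to cube roots of unity -/

/-- For every direction `e` some cube root of unity lies at least as far in the direction `-e` as
a given point `w` of the disc of radius `1/2`, the inscribed disc of the triangle of cube roots. -/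
lemma exists_cube_root (w e : ℂ) (hw : ‖w‖ ≤ 1 / 2) :
    ∃ v : ℂ, v ^ 3 = 1 ∧ ((v - w) * (starRingEnd ℂ) e).re ≤ 0 := by
  have h3 : Real.sqrt 3 * Real.sqrt 3 = 3 := Real.mul_self_sqrt (by norm_num)
  set t := Real.sqrt 3 with ht
  have h4 : t * t * t = 3 * t := by rw [h3]
  have hr : e.re ^ 2 + e.im ^ 2 = ‖e‖ ^ 2 := by
    rw [← Complex.normSq_eq_norm_sq, Complex.normSq_apply]; ring
  have hwe : -(‖e‖ / 2) ≤ (w * (starRingEnd ℂ) e).re := by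
    have h1 := Complex.abs_re_le_norm (w * (starRingEnd ℂ) e)
    rw [norm_mul, Complex.norm_conj] at h1
    have := (abs_le.1 h1).1
    nlinarith [norm_nonneg e]
  suffices h : ∃ v : ℂ, v ^ 3 = 1 ∧ (v * (starRingEnd ℂ) e).re ≤ -(‖e‖ / 2) by
    obtain ⟨v, hv, hv2⟩ := h
    exact ⟨v, hv, by rw [sub_mul, Complex.sub_re]; linarith⟩
  by_contra! hcon
  have hx := hcon 1 (by norm_num)
  have hy := hcon (⟨-1 / 2, t / 2⟩ : ℂ) (by
    apply Complex.ext <;> simp [pow_succ] <;> nlinarith [h4])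
  have hz := hcon (⟨-1 / 2, -(t / 2)⟩ : ℂ) (by
    apply Complex.ext <;> simp [pow_succ] <;> nlinarith [h4])
  simp only [Complex.mul_re, Complex.conj_re, Complex.conj_im, Complex.one_re, Complex.one_im]
    at hx hy hz
  -- The three projections `x, y, z` have sum `0` and sum of squares `3‖e‖²/2`, so the three
  -- positive numbers obtained by adding `‖e‖/2` have vanishing second symmetric function.
  have px : 0 < 1 * e.re - 0 * -e.im + ‖e‖ / 2 := by linarith
  have py : 0 < -1 / 2 * e.re - t / 2 * -e.im + ‖e‖ / 2 := by linarith
  have pz : 0 < -1 / 2 * e.re - -(t / 2) * -e.im + ‖e‖ / 2 := by linarith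
  have hxy := mul_pos px py
  have hyz := mul_pos py pz
  have hzx := mul_pos pz px
  nlinarith

/-- Rounding the coefficients `w k` to cube roots of unity one after the other, each time not
moving further along the accumulated error, keeps the weighted error of square-root size. -/
lemma exists_rounding (w : ℕ → ℂ) (hw : ∀ n, ‖w n‖ ≤ 1 / 2) (L : ℕ → ℝ) (hL : ∀ n, 0 ≤ L n) :
    ∃ v : ℕ → ℂ, (∀ n, v n ^ 3 = 1) ∧ ∀ n,
      ‖∑ k ∈ Finset.range n, (v k - w k) * (L k : ℂ)‖ ^ 2 ≤ ∑ k ∈ Finset.range n, 4 * L k ^ 2 := by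
  choose c hc1 hc2 using fun (n : ℕ) (e : ℂ) => exists_cube_root (w n) e (hw n)
  let E : ℕ → ℂ := fun n => Nat.rec 0 (fun n e => e + (c n e - w n) * (L n : ℂ)) n
  have hE1 : ∀ n, E (n + 1) = E n + (c n (E n) - w n) * (L n : ℂ) := fun n => rfl
  have hE : ∀ n, E n = ∑ k ∈ Finset.range n, (c k (E k) - w k) * (L k : ℂ) := by
    intro n
    induction n with
    | zero => rfl
    | succ n ih => rw [Finset.sum_range_succ, hE1, ← ih]
  refine ⟨fun n => c n (E n), fun n => hc1 n _, fun n => ?_⟩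
  rw [← hE]
  induction n with
  | zero => simp [E]
  | succ n ih =>
    rw [Finset.sum_range_succ, hE1]
    have hv : ‖c n (E n)‖ = 1 := by
      have := congrArg norm (hc1 n (E n))
      rw [norm_pow, norm_one] at this
      exact (pow_eq_one_iff_of_nonneg (norm_nonneg _) (by norm_num)).1 this
    have hd : ‖c n (E n) - w n‖ ≤ 2 := by
      have := norm_sub_le (c n (E n)) (w n); linarith [hw n]
    have h0 := hc2 n (E n)
    set d := c n (E n) - w n with hdd
    have hexp : ‖E n + d * (L n : ℂ)‖ ^ 2
        = ‖E n‖ ^ 2 + 2 * L n * (d * (starRingEnd ℂ) (E n)).re + ‖d‖ ^ 2 * L n ^ 2 := by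
      simp only [← Complex.normSq_eq_norm_sq, Complex.normSq_apply, Complex.add_re, Complex.add_im,
        Complex.mul_re, Complex.mul_im, Complex.conj_re, Complex.conj_im, Complex.ofReal_re,
        Complex.ofReal_im]
      ring
    rw [hexp]
    have h1 : 2 * L n * (d * (starRingEnd ℂ) (E n)).re ≤ 0 :=
      mul_nonpos_of_nonneg_of_nonpos (by linarith [hL n]) h0
    have h2 : ‖d‖ ^ 2 * L n ^ 2 ≤ 4 * L n ^ 2 := by
      gcongr
      nlinarith [norm_nonneg d]
    linarith

/-- A Dirichlet series whose coefficients have partial sums `O(n ^ r)` extends to `Re s > r`. -/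
lemma exists_extension_of_partial_sums (f : ℕ → ℂ) {r : ℝ} (hr : 0 ≤ r)
    (hO : (fun n : ℕ => ∑ k ∈ Finset.Icc 1 n, f k) =O[atTop] fun n : ℕ => (n : ℝ) ^ r) :
    ∃ H : ℂ → ℂ, DifferentiableOn ℂ H {s : ℂ | r < s.re} ∧
      ∀ s : ℂ, r < s.re → LSeriesSummable f s → LSeries f s = H s := by
  set S : ℝ → ℂ := fun t => ∑ k ∈ Finset.Icc 1 ⌊t⌋₊, f k with hS
  have hSmeas : LocallyIntegrableOn S (Ici 0) := by
    have := locallyIntegrableOn_mul_sum_Icc (g := fun _ : ℝ => (1 : ℂ)) (m := 1) f (a := 0) le_rfl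
      (continuous_const.locallyIntegrable.locallyIntegrableOn _)
    simpa [hS] using this
  have hSO : S =O[atTop] fun t : ℝ => t ^ r := by
    have h1 : S =O[atTop] fun t : ℝ => ((⌊t⌋₊ : ℕ) : ℝ) ^ r :=
      hO.comp_tendsto tendsto_nat_floor_atTop
    refine h1.trans (Asymptotics.IsBigO.of_bound 1 ?_)
    filter_upwards [eventually_ge_atTop 0] with t ht
    rw [Real.norm_of_nonneg (by positivity), Real.norm_of_nonneg (by positivity), one_mul]
    exact Real.rpow_le_rpow (by positivity) (Nat.floor_le ht) hr
  refine ⟨fun s => s * mellin (indicator (Ioi 1) S) (-s), ?_, ?_⟩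
  · intro s hs
    have hs' : r < s.re := hs
    refine DifferentiableAt.differentiableWithinAt ?_
    refine differentiableAt_id.mul ?_
    have hd : DifferentiableAt ℂ (mellin (indicator (Ioi 1) S)) (-s) := by
      refine mellin_differentiableAt_of_isBigO_rpow (a := -r) (b := (-s).re - 1) ?_ ?_ ?_ ?_ ?_
      · have h := hSmeas.mono_set (Ioi_subset_Ici_self)
        intro x hx
        obtain ⟨U, hU, hUi⟩ := h x hx
        exact ⟨U, hU, hUi.indicator measurableSet_Ioi⟩
      · refine Asymptotics.IsBigO.trans (Asymptotics.IsBigO.of_bound 1 ?_) (by simpa using hSO)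
        exact Eventually.of_forall fun t => by
          rw [one_mul]; exact norm_indicator_le_norm_self _ _
      · simpa using hs'
      · refine Asymptotics.IsBigO.of_bound 1 ?_
        filter_upwards [nhdsWithin_le_nhds (Iio_mem_nhds (zero_lt_one' ℝ))] with t ht
        rw [indicator_of_notMem (by simpa using (le_of_lt ht : t ≤ 1))]
        simp
      · linarith
    exact hd.comp s differentiableAt_id.neg
  · intro s hs hsum
    rw [LSeries_eq_mul_integral f hr hs hsum hO]
    congr 1
    rw [mellin]
    have : ∀ t : ℝ, (t : ℂ) ^ (-s - 1) • indicator (Ioi 1) S t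
        = indicator (Ioi 1) (fun t : ℝ => (t : ℂ) ^ (-s - 1) • S t) t := by
      intro t
      by_cases ht : t ∈ Ioi (1 : ℝ) <;> simp [ht]
    simp_rw [this]
    rw [setIntegral_indicator measurableSet_Ioi,
      inter_eq_right.2 (Ioi_subset_Ioi zero_le_one)]
    refine setIntegral_congr_fun measurableSet_Ioi fun t _ => ?_
    simp only [hS, smul_eq_mul]
    rw [mul_comm, show -(s + 1) = -s - 1 by ring]

/-- The coefficients `log p` at primes and `0` elsewhere. -/
noncomputable def primeLog (n : ℕ) : ℝ := if n.Prime then Real.log n else 0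

lemma primeLog_nonneg (n : ℕ) : 0 ≤ primeLog n := by
  unfold primeLog; split_ifs
  · exact Real.log_natCast_nonneg n
  · exact le_rfl

lemma primeLog_le (n : ℕ) : primeLog n ≤ 50 * (n : ℝ) ^ (1 / 50 : ℝ) := by
  have h := Real.log_le_rpow_div (x := n) (by positivity) (ε := 1 / 50) (by norm_num)
  unfold primeLog; split_ifs
  · linarith
  · positivity

/-- The prime sum with bounded coefficients converges absolutely for `Re s > 1`. -/
lemma lseriesSummable_primeLog (a : ℕ → ℂ) (ha : ∀ n, ‖a n‖ ≤ 2) {s : ℂ} (hs : 1 < s.re) :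
    LSeriesSummable (fun n => a n * (primeLog n : ℂ)) s := by
  set ε := min (1 / 50) ((s.re - 1) / 2) with hε
  have hε0 : 0 < ε := lt_min (by norm_num) (by linarith)
  have hε1 : ε ≤ (s.re - 1) / 2 := min_le_right _ _
  refine LSeriesSummable_of_le_const_mul_rpow (x := 1 + ε) (by linarith) ⟨2 / ε, fun n hn => ?_⟩
  rw [norm_mul, Complex.norm_real, Real.norm_of_nonneg (primeLog_nonneg n), add_sub_cancel_left]
  have h := Real.log_le_rpow_div (x := n) (by positivity) hε0
  have h2 : primeLog n ≤ (n : ℝ) ^ ε / ε := by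
    unfold primeLog; split_ifs
    · exact h
    · positivity
  calc _ ≤ 2 * ((n : ℝ) ^ ε / ε) := by
        gcongr
        · exact primeLog_nonneg n
        · exact ha n
    _ = _ := by ring

/-- Rounding coefficients of size at most `1/2` to cube roots of unity changes the prime sum only
by a function holomorphic in `Re s > 13/25`. -/
lemma exists_rounded_extension (w : ℕ → ℂ) (hw : ∀ n, ‖w n‖ ≤ 1 / 2) :
    ∃ v : ℕ → ℂ, (∀ n, v n ^ 3 = 1) ∧ ∃ H : ℂ → ℂ,
      DifferentiableOn ℂ H {s : ℂ | 13 / 25 < s.re} ∧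
      ∀ s : ℂ, 1 < s.re → LSeries (fun n => (v n - w n) * (primeLog n : ℂ)) s = H s := by
  obtain ⟨v, hv, hsum⟩ := exists_rounding w hw primeLog primeLog_nonneg
  have hv2 : ∀ n, ‖v n - w n‖ ≤ 2 := by
    intro n
    have h1 : ‖v n‖ = 1 := by
      have := congrArg norm (hv n)
      rw [norm_pow, norm_one] at this
      exact (pow_eq_one_iff_of_nonneg (norm_nonneg _) (by norm_num)).1 this
    have := norm_sub_le (v n) (w n); linarith [hw n]
  have hO : (fun n : ℕ => ∑ k ∈ Finset.Icc 1 n, (v k - w k) * (primeLog k : ℂ)) =O[atTop]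
      fun n : ℕ => (n : ℝ) ^ (13 / 25 : ℝ) := by
    refine Asymptotics.IsBigO.of_bound 100 (Eventually.of_forall fun n => ?_)
    rw [Real.norm_of_nonneg (by positivity)]
    have heq : ∑ k ∈ Finset.Icc 1 n, (v k - w k) * (primeLog k : ℂ)
        = ∑ k ∈ Finset.range (n + 1), (v k - w k) * (primeLog k : ℂ) := by
      rw [Finset.range_eq_Ico, Finset.sum_eq_sum_Ico_succ_bot (Nat.succ_pos n),
        ← Finset.Ico_add_one_right_eq_Icc]
      simp [primeLog]
    rw [heq]
    refine abs_le_of_sq_le_sq' ?_ (by positivity) |>.2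
    refine (hsum (n + 1)).trans ?_
    have h0 : primeLog 0 = 0 := by simp [primeLog]
    rw [Finset.sum_range_succ', h0]
    have hb : ∀ k ∈ Finset.range n, 4 * primeLog (k + 1) ^ 2
        ≤ 4 * (50 * (n : ℝ) ^ (1 / 50 : ℝ)) ^ 2 := by
      intro k hk
      have hkn : ((k + 1 : ℕ) : ℝ) ≤ n := by exact_mod_cast Finset.mem_range.1 hk
      have := primeLog_le (k + 1)
      have h0 := primeLog_nonneg (k + 1)
      gcongr
      refine this.trans ?_
      gcongr
    have h := Finset.sum_le_sum hb
    rw [Finset.sum_const, Finset.card_range, nsmul_eq_mul] at h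
    have h2 : (n : ℝ) * (4 * (50 * (n : ℝ) ^ (1 / 50 : ℝ)) ^ 2) = (100 * (n : ℝ) ^ (13 / 25 : ℝ)) ^ 2 := by
      rcases Nat.eq_zero_or_pos n with rfl | hn
      · simp [Real.zero_rpow]
      · have hn' : (0 : ℝ) < n := by exact_mod_cast hn
        have e1 : ((n : ℝ) ^ (13 / 25 : ℝ)) ^ 2 = n * ((n : ℝ) ^ (1 / 50 : ℝ)) ^ 2 := by
          rw [← Real.rpow_natCast, ← Real.rpow_natCast, ← Real.rpow_mul hn'.le,
            ← Real.rpow_mul hn'.le]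
          nth_rewrite 2 [← Real.rpow_one (n : ℝ)]
          rw [← Real.rpow_add hn']
          norm_num
        rw [mul_pow, mul_pow, e1]; ring
    rw [h2] at h
    simpa using h
  obtain ⟨H, hH1, hH2⟩ := exists_extension_of_partial_sums _ (by norm_num) hO
  exact ⟨v, hv, H, hH1, fun s hs => hH2 s (by linarith) (lseriesSummable_primeLog _ hv2 hs)⟩

/-! ### The difference of integral and weighted prime sum over a block -/

/-- Remainder of the exponential series, with a free parameter `K` in place of factorials. -/
lemma norm_exp_sub_sum_le_geom (z : ℂ) (n : ℕ) {K : ℝ} (hK : 1 ≤ K) :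
    ‖cexp z - ∑ j ∈ Finset.range n, z ^ j / j.factorial‖ ≤ K⁻¹ ^ n * Real.exp (K * ‖z‖) := by
  refine (Complex.norm_exp_sub_sum_le_exp_norm_sub_sum z n).trans ?_
  have hK0 : 0 < K := by linarith
  set r := ‖z‖ with hr
  have hr0 : 0 ≤ r := norm_nonneg z
  have hs : ∀ x : ℝ, HasSum (fun j : ℕ => x ^ j / (j.factorial : ℝ)) (Real.exp x) := fun x => by
    rw [Real.exp_eq_exp_ℝ]; exact NormedSpace.expSeries_div_hasSum_exp x
  rw [← (hs r).tsum_eq, ← (hs r).summable.sum_add_tsum_nat_add n, add_sub_cancel_left]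
  have h1 : Summable fun j : ℕ => (K * r) ^ (j + n) / ((j + n).factorial : ℝ) :=
    (summable_nat_add_iff n).2 (hs (K * r)).summable
  calc ∑' j : ℕ, r ^ (j + n) / ((j + n).factorial : ℝ)
      ≤ ∑' j : ℕ, K⁻¹ ^ n * ((K * r) ^ (j + n) / ((j + n).factorial : ℝ)) := by
        refine Summable.tsum_le_tsum (fun j => ?_) ((summable_nat_add_iff n).2 (hs r).summable)
          (h1.mul_left _)
        have : K⁻¹ ^ n * ((K * r) ^ (j + n) / ((j + n).factorial : ℝ))
            = K ^ j * (r ^ (j + n) / ((j + n).factorial : ℝ)) := by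
          rw [mul_pow, pow_add K, inv_pow]; field_simp
        rw [this]
        exact le_mul_of_one_le_left (by positivity) (one_le_pow₀ hK)
    _ = K⁻¹ ^ n * ∑' j : ℕ, ((K * r) ^ (j + n) / ((j + n).factorial : ℝ)) := tsum_mul_left
    _ ≤ K⁻¹ ^ n * Real.exp (K * r) := by
        gcongr
        rw [← (hs (K * r)).tsum_eq, ← (hs (K * r)).summable.sum_add_tsum_nat_add n]
        exact le_add_of_nonneg_left (Finset.sum_nonneg fun _ _ => by positivity)

/-- If a density and a finite set of point masses have the same moments up to order `m`, their
Laplace transforms differ only by the contribution of the Taylor remainder. -/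
lemma norm_moment_diff_le (S : Finset ℕ) (Q : ℝ → ℂ) (hQ : ContinuousOn Q (Icc 0 1)) (c : ℕ → ℂ)
    (v : ℕ → ℝ) (hv : ∀ p ∈ S, v p ∈ Icc (0 : ℝ) 1) (m : ℕ)
    (hmom : ∀ j ≤ m, ∑ p ∈ S, c p * (v p : ℂ) ^ j = ∫ t in (0 : ℝ)..1, Q t * (t : ℂ) ^ j)
    {A B : ℝ} (hA : ∀ t ∈ Icc (0 : ℝ) 1, ‖Q t‖ ≤ A) (hB : ∑ p ∈ S, ‖c p‖ ≤ B) (s : ℂ)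
    {K : ℝ} (hK : 1 ≤ K) :
    ‖(∫ t in (0 : ℝ)..1, Q t * cexp (-s * t)) - ∑ p ∈ S, c p * cexp (-s * v p)‖
      ≤ (A + B) * (K⁻¹ ^ (m + 1) * Real.exp (K * ‖s‖)) := by
  set T : ℝ → ℂ := fun t => ∑ j ∈ Finset.range (m + 1), (-s * t) ^ j / j.factorial with hT
  set ε := K⁻¹ ^ (m + 1) * Real.exp (K * ‖s‖) with hε
  have hK0 : 0 < K := by linarith
  have hε0 : 0 ≤ ε := by positivity
  have hrem : ∀ t ∈ Icc (0 : ℝ) 1, ‖cexp (-s * t) - T t‖ ≤ ε := by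
    intro t ht
    refine (norm_exp_sub_sum_le_geom (-s * t) (m + 1) hK).trans ?_
    rw [hε]
    gcongr
    rw [norm_mul, norm_neg, Complex.norm_real, Real.norm_of_nonneg ht.1]
    exact mul_le_of_le_one_right (norm_nonneg _) ht.2
  have hfint : ∀ f : ℝ → ℂ, Continuous f → IntervalIntegrable (fun t => Q t * f t) volume 0 1 := by
    intro f hf
    refine ContinuousOn.intervalIntegrable ?_
    rw [uIcc_of_le zero_le_one]
    exact hQ.mul hf.continuousOn
  have hTc : Continuous T := by fun_prop
  have hec : Continuous fun t : ℝ => cexp (-s * t) := by fun_prop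
  have hTeq : ∫ t in (0 : ℝ)..1, Q t * T t = ∑ p ∈ S, c p * T (v p) := by
    have h1 : ∀ t : ℝ, Q t * T t = ∑ j ∈ Finset.range (m + 1),
        (-s) ^ j / j.factorial * (Q t * (t : ℂ) ^ j) := by
      intro t
      rw [hT, Finset.mul_sum]
      refine Finset.sum_congr rfl fun j _ => ?_
      rw [mul_pow]; ring
    simp_rw [h1]
    rw [intervalIntegral.integral_finsetSum
      fun j _ => (hfint (fun t => (t : ℂ) ^ j) (by fun_prop)).const_mul _]
    simp_rw [intervalIntegral.integral_const_mul]
    rw [Finset.sum_congr rfl fun j hj => by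
      rw [← hmom j (Nat.lt_succ_iff.1 (Finset.mem_range.1 hj))]]
    simp_rw [Finset.mul_sum]
    rw [Finset.sum_comm]
    refine Finset.sum_congr rfl fun p _ => ?_
    rw [hT, Finset.mul_sum]
    refine Finset.sum_congr rfl fun j _ => ?_
    rw [mul_pow]; ring
  have hkey : (∫ t in (0 : ℝ)..1, Q t * cexp (-s * t)) - ∑ p ∈ S, c p * cexp (-s * v p)
      = (∫ t in (0 : ℝ)..1, Q t * (cexp (-s * t) - T t))
        - ∑ p ∈ S, c p * (cexp (-s * v p) - T (v p)) := by
    simp_rw [mul_sub]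
    rw [intervalIntegral.integral_sub (hfint _ hec) (hfint _ hTc), hTeq, Finset.sum_sub_distrib]
    ring
  rw [hkey]
  refine (norm_sub_le _ _).trans ?_
  rw [add_mul]
  have hA0 : 0 ≤ A := (norm_nonneg _).trans (hA 0 ⟨le_rfl, zero_le_one⟩)
  refine add_le_add ?_ ?_
  · refine (intervalIntegral.norm_integral_le_of_norm_le_const (C := A * ε) fun t ht => ?_).trans
      (by simp)
    rw [uIoc_of_le zero_le_one] at ht
    have ht' : t ∈ Icc (0 : ℝ) 1 := ⟨ht.1.le, ht.2⟩
    rw [norm_mul]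
    exact mul_le_mul (hA t ht') (hrem t ht') (norm_nonneg _) hA0
  · refine (norm_sum_le _ _).trans ?_
    calc ∑ p ∈ S, ‖c p * (cexp (-s * v p) - T (v p))‖ ≤ ∑ p ∈ S, ‖c p‖ * ε := by
          refine Finset.sum_le_sum fun p hp => ?_
          rw [norm_mul]
          exact mul_le_mul_of_nonneg_left (hrem _ (hv p hp)) (norm_nonneg _)
      _ = (∑ p ∈ S, ‖c p‖) * ε := (Finset.sum_mul _ _ _).symm
      _ ≤ B * ε := by gcongr

/-- The density of the integral `∫ q(x) x^{-s} dx` over `(e^m, e^{m+1}]` in the variable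
`t = log x - m`. -/
noncomputable def blockDensity (q : ℝ → ℂ) (m : ℕ) (t : ℝ) : ℂ :=
  q (Real.exp (m + t)) * (Real.exp (m + t) : ℂ)

/-- The part of `∫ q(x) x^{-s} dx - ∑ w(p) p^{-s} log p` with `log x` and `log p` in
`(m, m + 1]`. -/
noncomputable def blockDiff (q : ℝ → ℂ) (w : ℕ → ℂ) (m : ℕ) (s : ℂ) : ℂ :=
  (∫ x in Ioc (Real.exp m) (Real.exp (m + 1)), q x * (x : ℂ) ^ (-s))
    - ∑ p ∈ blockPrimes m, w p * (p : ℂ) ^ (-s) * (Real.log p : ℂ)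

lemma continuousOn_blockDensity {q : ℝ → ℂ} (hq : ContinuousOn q (Ici 1)) (m : ℕ) :
    ContinuousOn (blockDensity q m) (Icc 0 1) := by
  unfold blockDensity
  refine ContinuousOn.mul (hq.comp (by fun_prop) fun t ht => ?_) (by fun_prop)
  exact Real.one_le_exp (add_nonneg (Nat.cast_nonneg m) ht.1)

lemma cpow_eq_exp_block {x : ℝ} (hx : 0 < x) (m : ℕ) (s : ℂ) :
    (x : ℂ) ^ (-s) = cexp (-s * m) * cexp (-s * ((Real.log x - m : ℝ) : ℂ)) := by
  rw [Complex.cpow_def_of_ne_zero (by exact_mod_cast hx.ne'), ← Complex.exp_add,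
    ← Complex.ofReal_log hx.le]
  congr 1; push_cast; ring

lemma block_integral_eq {q : ℝ → ℂ} (hq : ContinuousOn q (Ici 1)) (m : ℕ) (s : ℂ) :
    (∫ x in Ioc (Real.exp m) (Real.exp (m + 1)), q x * (x : ℂ) ^ (-s))
      = cexp (-s * m) * ∫ t in (0 : ℝ)..1, blockDensity q m t * cexp (-s * t) := by
  have hle : Real.exp m ≤ Real.exp (m + 1) := Real.exp_le_exp.2 (by linarith)
  rw [← intervalIntegral.integral_of_le hle]
  have hf : ∀ t : ℝ, HasDerivAt (fun t : ℝ => Real.exp (m + t)) (Real.exp (m + t)) t := by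
    intro t
    simpa using ((hasDerivAt_id t).const_add (m : ℝ)).exp
  have h := intervalIntegral.integral_deriv_smul_comp'' (a := 0) (b := 1)
    (f := fun t : ℝ => Real.exp (m + t)) (f' := fun t : ℝ => Real.exp (m + t))
    (g := fun x : ℝ => q x * (x : ℂ) ^ (-s)) (by fun_prop)
    (fun t _ => (hf t).hasDerivWithinAt) (by fun_prop) (by
      rintro _ ⟨t, ht, rfl⟩
      rw [uIcc_of_le zero_le_one] at ht
      have h1 : (1 : ℝ) ≤ Real.exp (m + t) :=
        Real.one_le_exp (add_nonneg (Nat.cast_nonneg m) ht.1)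
      have hsub : (fun t : ℝ => Real.exp (m + t)) '' uIcc 0 1 ⊆ Ici 1 := by
        rintro _ ⟨u, hu, rfl⟩
        rw [uIcc_of_le zero_le_one] at hu
        exact Real.one_le_exp (add_nonneg (Nat.cast_nonneg m) hu.1)
      refine ((hq _ h1).mono hsub).mul ?_
      refine (continuousAt_ofReal_cpow_const _ _ (Or.inr ?_)).continuousWithinAt
      exact (Real.exp_pos _).ne')
  simp only [add_zero] at h
  rw [← h, ← intervalIntegral.integral_const_mul]
  refine intervalIntegral.integral_congr fun t _ => ?_
  simp only [Function.comp, blockDensity]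
  rw [cpow_eq_exp_block (Real.exp_pos _) m s, Real.log_exp, add_sub_cancel_left, Complex.real_smul]
  ring

lemma sum_log_blockPrimes_le (m : ℕ) :
    ∑ p ∈ blockPrimes m, Real.log p ≤ 2 * Real.exp (m + 1) := by
  have hle : Real.exp m ≤ Real.exp (m + 1) := Real.exp_le_exp.2 (by linarith)
  rw [blockPrimes, ← theta_sub_theta hle]
  have h1 := Chebyshev.theta_le_log4_mul_x (Real.exp_pos ((m : ℝ) + 1)).le
  have h2 := Chebyshev.theta_nonneg (Real.exp m)
  have h3 : Real.log 4 ≤ 2 := by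
    rw [show (4 : ℝ) = 2 ^ 2 by norm_num, Real.log_pow]
    have := Real.log_two_lt_d9
    push_cast; linarith
  nlinarith [Real.exp_pos ((m : ℝ) + 1)]

lemma norm_blockDiff_le {q : ℝ → ℂ} (hq : ContinuousOn q (Ici 1)) {w : ℕ → ℂ}
    (hw : ∀ p, ‖w p‖ ≤ 1 / 2) {m : ℕ} (hqb : ∀ x, Real.exp m ≤ x → ‖q x‖ ≤ 1)
    (hmom : ∀ j ≤ m, ∑ p ∈ blockPrimes m, w p * (Real.log p : ℂ) * ((Real.log p - m : ℝ) : ℂ) ^ j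
      = ∫ t in (0 : ℝ)..1, blockDensity q m t * (t : ℂ) ^ j) (s : ℂ) {K : ℝ} (hK : 1 ≤ K) :
    ‖blockDiff q w m s‖ ≤ Real.exp (m * ‖s‖) *
      (2 * Real.exp (m + 1) * (K⁻¹ ^ (m + 1) * Real.exp (K * ‖s‖))) := by
  have hsum : ∑ p ∈ blockPrimes m, w p * (p : ℂ) ^ (-s) * (Real.log p : ℂ)
      = cexp (-s * m) * ∑ p ∈ blockPrimes m, w p * (Real.log p : ℂ)
        * cexp (-s * ((Real.log p - m : ℝ) : ℂ)) := by
    rw [Finset.mul_sum]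
    refine Finset.sum_congr rfl fun p hp => ?_
    have hp0 : (0 : ℝ) < p := by exact_mod_cast (mem_blockPrimes.1 hp).1.pos
    have := cpow_eq_exp_block hp0 m s
    rw [Complex.ofReal_natCast] at this
    rw [this]; ring
  rw [blockDiff, block_integral_eq hq, hsum, ← mul_sub, norm_mul]
  have h := norm_moment_diff_le (blockPrimes m) (blockDensity q m) (continuousOn_blockDensity hq m)
    (fun p => w p * (Real.log p : ℂ)) (fun p => Real.log p - m)
    (fun p hp => ⟨by linarith [(mem_blockPrimes.1 hp).2.1], by linarith [(mem_blockPrimes.1 hp).2.2]⟩)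
    m hmom (A := Real.exp (m + 1)) (B := Real.exp (m + 1)) ?_ ?_ s hK
  · rw [two_mul]
    refine mul_le_mul ?_ h (norm_nonneg _) (Real.exp_pos _).le
    rw [Complex.norm_exp]
    refine Real.exp_le_exp.2 ((Complex.re_le_norm _).trans ?_)
    rw [norm_mul, norm_neg, Complex.norm_natCast, mul_comm]
  · intro t ht
    rw [blockDensity, norm_mul, Complex.norm_real, Real.norm_of_nonneg (Real.exp_pos _).le]
    calc _ ≤ 1 * Real.exp (m + 1) := by
          gcongr
          · exact hqb _ (Real.exp_le_exp.2 (by linarith [ht.1]))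
          · exact ht.2
      _ = _ := one_mul _
  · calc ∑ p ∈ blockPrimes m, ‖w p * (Real.log p : ℂ)‖
        ≤ ∑ p ∈ blockPrimes m, 1 / 2 * Real.log p := by
          refine Finset.sum_le_sum fun p _ => ?_
          rw [norm_mul, Complex.norm_real, Real.norm_of_nonneg (Real.log_natCast_nonneg p)]
          gcongr
          exact hw p
      _ ≤ _ := by
          rw [← Finset.mul_sum]; linarith [sum_log_blockPrimes_le m]

lemma differentiable_blockDiff {q : ℝ → ℂ} (hq : ContinuousOn q (Ici 1)) (w : ℕ → ℂ) (m : ℕ) :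
    Differentiable ℂ (blockDiff q w m) := by
  have hm1 : (1 : ℝ) ≤ Real.exp m := Real.one_le_exp (Nat.cast_nonneg m)
  unfold blockDiff
  refine Differentiable.sub ?_ ?_
  · have heq : (fun s : ℂ => ∫ x in Ioc (Real.exp m) (Real.exp (m + 1)), q x * (x : ℂ) ^ (-s))
        = fun s => mellin (indicator (Ioc (Real.exp m) (Real.exp (m + 1))) q) (1 - s) := by
      ext s
      rw [mellin]
      have : ∀ t : ℝ, (t : ℂ) ^ (1 - s - 1) •
          indicator (Ioc (Real.exp m) (Real.exp (m + 1))) q t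
          = indicator (Ioc (Real.exp m) (Real.exp (m + 1))) (fun t : ℝ => q t * (t : ℂ) ^ (-s)) t := by
        intro t
        by_cases ht : t ∈ Ioc (Real.exp m) (Real.exp (m + 1))
        · rw [indicator_of_mem ht, indicator_of_mem ht, smul_eq_mul, mul_comm,
            show 1 - s - 1 = -s by ring]
        · rw [indicator_of_notMem ht, indicator_of_notMem ht, smul_zero]
      simp_rw [this]
      rw [setIntegral_indicator measurableSet_Ioc, inter_eq_right.2]
      exact fun x hx => lt_trans (Real.exp_pos _) hx.1
    rw [heq]
    intro s
    have hd : DifferentiableAt ℂ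
        (mellin (indicator (Ioc (Real.exp m) (Real.exp (m + 1))) q)) (1 - s) := by
      refine mellin_differentiableAt_of_isBigO_rpow (a := (1 - s).re + 1) (b := (1 - s).re - 1)
        ?_ ?_ (by linarith) ?_ (by linarith)
      · refine Integrable.locallyIntegrable ?_ |>.locallyIntegrableOn _
        rw [integrable_indicator_iff measurableSet_Ioc]
        refine IntegrableOn.mono_set (t := Icc (Real.exp m) (Real.exp (m + 1))) ?_
          Ioc_subset_Icc_self
        exact (hq.mono fun x hx => hm1.trans hx.1).integrableOn_Icc
      · refine Asymptotics.IsBigO.of_bound 1 ?_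
        filter_upwards [eventually_gt_atTop (Real.exp (m + 1))] with t ht
        rw [indicator_of_notMem fun h => absurd h.2 (not_le.2 ht)]
        simp
      · refine Asymptotics.IsBigO.of_bound 1 ?_
        filter_upwards [nhdsWithin_le_nhds (Iio_mem_nhds (zero_lt_one' ℝ))] with t ht
        rw [indicator_of_notMem fun h => absurd h.1 (not_lt.2 (le_trans (le_of_lt ht) hm1))]
        simp
    exact hd.comp s (differentiableAt_id.const_sub 1)
  · refine Differentiable.fun_sum fun p hp => ?_
    have hp0 : (p : ℂ) ≠ 0 := by exact_mod_cast (mem_blockPrimes.1 hp).1.ne_zero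
    refine Differentiable.mul_const (Differentiable.const_mul ?_ _) _
    exact differentiable_neg.const_cpow (Or.inl hp0)

/-- The block differences with matched moments sum to an entire function. -/
lemma differentiable_tsum_blockDiff {q : ℝ → ℂ} (hq : ContinuousOn q (Ici 1)) {w : ℕ → ℂ}
    (hw : ∀ p, ‖w p‖ ≤ 1 / 2) {m₀ : ℕ} (hqb : ∀ x, Real.exp m₀ ≤ x → ‖q x‖ ≤ 1)
    (hmom : ∀ m, m₀ ≤ m → ∀ j ≤ m,
      ∑ p ∈ blockPrimes m, w p * (Real.log p : ℂ) * ((Real.log p - m : ℝ) : ℂ) ^ j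
      = ∫ t in (0 : ℝ)..1, blockDensity q m t * (t : ℂ) ^ j) :
    Differentiable ℂ fun s => ∑' i : ℕ, blockDiff q w (i + m₀) s := by
  intro s₀
  set R := ‖s₀‖ + 1 with hR
  have hR0 : 0 < R := by positivity
  -- On the disc of radius `R` the bound with `K = e^{R + 2}` decays geometrically.
  set K := Real.exp (R + 2) with hK
  have hK1 : 1 ≤ K := Real.one_le_exp (by linarith)
  have hu : Summable fun i : ℕ => 2 * Real.exp (K * R) * Real.exp (-1) ^ (i + m₀) := by
    refine Summable.mul_left _ ((summable_nat_add_iff m₀).2 ?_)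
    exact summable_geometric_of_lt_one (Real.exp_pos _).le (Real.exp_lt_one_iff.2 (by norm_num))
  have hd := differentiableOn_tsum_of_summable_norm (F := fun i : ℕ => blockDiff q w (i + m₀))
    (U := Metric.ball 0 R) hu (fun i => (differentiable_blockDiff hq w _).differentiableOn)
    Metric.isOpen_ball (fun i s hs => ?_)
  · exact hd.differentiableAt (Metric.isOpen_ball.mem_nhds (by simp [hR]))
  · have hsR : ‖s‖ ≤ R := by simpa using (le_of_lt hs : dist s 0 ≤ R)
    set m := i + m₀ with hm
    have hm0 : m₀ ≤ m := by omega
    refine (norm_blockDiff_le hq hw (m := m) (fun x hx => hqb x (le_trans ?_ hx)) (hmom m hm0) s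
      hK1).trans ?_
    · exact Real.exp_le_exp.2 (by exact_mod_cast hm0)
    · calc Real.exp (m * ‖s‖) * (2 * Real.exp (m + 1) * (K⁻¹ ^ (m + 1) * Real.exp (K * ‖s‖)))
          ≤ Real.exp (m * R) * (2 * Real.exp (m + 1) * (K⁻¹ ^ (m + 1) * Real.exp (K * R))) := by
            gcongr
        _ = 2 * Real.exp (K * R) * Real.exp (m * R + (m + 1) + (m + 1) * (-(R + 2))) := by
            have h1 : K⁻¹ ^ (m + 1) = Real.exp ((m + 1) * (-(R + 2))) := by
              rw [hK, ← Real.exp_neg, ← Real.exp_nat_mul]; push_cast; rfl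
            rw [h1, Real.exp_add (m * R + (m + 1)), Real.exp_add (m * R)]
            ring
        _ ≤ 2 * Real.exp (K * R) * Real.exp (-1) ^ m := by
            rw [← Real.exp_nat_mul]
            gcongr
            nlinarith [Nat.cast_nonneg (α := ℝ) m]

/-! ### Coefficients on the primes, multiplicativity, and summation over blocks -/

/-- The index of the block containing a prime `n`: the `m` with `m < log n ≤ m + 1`. -/
noncomputable def blockIndex (n : ℕ) : ℕ := ⌈Real.log n⌉₊ - 1

lemma mem_blockPrimes_iff_blockIndex {p : ℕ} (hp : p.Prime) (m : ℕ) :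
    p ∈ blockPrimes m ↔ blockIndex p = m := by
  have hlog : 0 < Real.log p := Real.log_pos (by exact_mod_cast hp.one_lt)
  have hc : 0 < ⌈Real.log p⌉₊ := Nat.ceil_pos.2 hlog
  have h1 : blockIndex p = m ↔ ⌈Real.log p⌉₊ = m + 1 := by unfold blockIndex; omega
  rw [mem_blockPrimes, h1, Nat.ceil_eq_iff (Nat.succ_ne_zero m)]
  simp [hp]

/-- Coefficients of size at most `1/2` on the primes which reproduce, in every block far enough
out, the moments of the density of the integral. -/
lemma exists_coefficients {q : ℝ → ℂ} (hq : ContinuousOn q (Ici 1))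
    (hq0 : Tendsto q atTop (nhds 0)) :
    ∃ (m₀ : ℕ) (w : ℕ → ℂ), (∀ p, ‖w p‖ ≤ 1 / 2) ∧ (∀ x, Real.exp m₀ ≤ x → ‖q x‖ ≤ 1) ∧
      ∀ m, m₀ ≤ m → ∀ j ≤ m,
        ∑ p ∈ blockPrimes m, w p * (Real.log p : ℂ) * ((Real.log p - m : ℝ) : ℂ) ^ j
        = ∫ t in (0 : ℝ)..1, blockDensity q m t * (t : ℂ) ^ j := by
  obtain ⟨m₁, hm₁⟩ := exists_block_weights
  have hev : ∀ᶠ x in atTop, ‖q x‖ ≤ 1 / 100 := by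
    have := hq0.norm
    rw [norm_zero] at this
    exact this.eventually_le_const (by norm_num)
  obtain ⟨X, hX⟩ := eventually_atTop.1 hev
  obtain ⟨m₂, hm₂⟩ := eventually_atTop.1
    ((Real.tendsto_exp_atTop.comp tendsto_natCast_atTop_atTop).eventually_ge_atTop X)
  set m₀ := max m₁ m₂ with hm₀
  have hqs : ∀ x, Real.exp m₀ ≤ x → ‖q x‖ ≤ 1 / 100 := fun x hx =>
    hX x ((hm₂ m₀ (le_max_right _ _)).trans hx)
  have hU : ∀ m : ℕ, ∃ U : ℕ → ℂ, (∀ p, ‖U p‖ ≤ 1 / 2) ∧ (m₀ ≤ m → ∀ j ≤ m,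
        ∑ p ∈ blockPrimes m, U p * (Real.log p : ℂ) * ((Real.log p - m : ℝ) : ℂ) ^ j
        = ∫ t in (0 : ℝ)..1, blockDensity q m t * (t : ℂ) ^ j) := by
    intro m
    by_cases hm : m₀ ≤ m
    swap
    · exact ⟨0, fun p => by simp, fun h => absurd h hm⟩
    have hc := continuousOn_blockDensity hq m
    have hb : ∀ t ∈ Icc (0 : ℝ) 1, ‖blockDensity q m t‖ ≤ Real.exp m / 32 := by
      intro t ht
      have hmm : (m₀ : ℝ) ≤ m := by exact_mod_cast hm
      have h1 : ‖q (Real.exp (m + t))‖ ≤ 1 / 100 :=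
        hqs _ (Real.exp_le_exp.2 (by linarith [ht.1]))
      have h2 : Real.exp (m + t) ≤ Real.exp m * Real.exp 1 := by
        rw [← Real.exp_add]; exact Real.exp_le_exp.2 (by linarith [ht.2])
      have h3 := Real.exp_one_lt_d9
      rw [blockDensity, norm_mul, Complex.norm_real, Real.norm_of_nonneg (Real.exp_pos _).le]
      calc _ ≤ 1 / 100 * (Real.exp m * Real.exp 1) := by gcongr
        _ ≤ _ := by nlinarith [Real.exp_pos (m : ℝ)]
    obtain ⟨u, hu1, hu2⟩ := hm₁ m ((le_max_left _ _).trans hm) (fun t => (blockDensity q m t).re)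
      (Complex.continuous_re.comp_continuousOn hc)
      (fun t ht => (Complex.abs_re_le_norm _).trans (hb t ht))
    obtain ⟨u', hu1', hu2'⟩ := hm₁ m ((le_max_left _ _).trans hm)
      (fun t => (blockDensity q m t).im)
      (Complex.continuous_im.comp_continuousOn hc)
      (fun t ht => (Complex.abs_im_le_norm _).trans (hb t ht))
    refine ⟨fun p => (u p : ℂ) + (u' p : ℂ) * I, fun p => ?_, fun _ j hj => ?_⟩
    · refine (norm_add_le _ _).trans ?_
      rw [norm_mul, Complex.norm_I, mul_one, Complex.norm_real, Complex.norm_real,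
        Real.norm_eq_abs, Real.norm_eq_abs]
      linarith [hu1 p, hu1' p]
    · have e1 : ∑ p ∈ blockPrimes m, ((u p : ℂ) + (u' p : ℂ) * I) * (Real.log p : ℂ)
            * ((Real.log p - m : ℝ) : ℂ) ^ j
          = ((∑ p ∈ blockPrimes m, u p * (Real.log p * (Real.log p - m) ^ j) : ℝ) : ℂ)
            + ((∑ p ∈ blockPrimes m, u' p * (Real.log p * (Real.log p - m) ^ j) : ℝ) : ℂ) * I := by
        rw [Complex.ofReal_sum, Complex.ofReal_sum, Finset.sum_mul, ← Finset.sum_add_distrib]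
        refine Finset.sum_congr rfl fun p _ => ?_
        rw [Complex.ofReal_mul, Complex.ofReal_mul, Complex.ofReal_mul, Complex.ofReal_mul,
          Complex.ofReal_pow]
        ring
      have hfint : ∀ f : ℝ → ℝ, ContinuousOn f (Icc 0 1) →
          IntervalIntegrable (fun t => ((f t * t ^ j : ℝ) : ℂ)) volume 0 1 := by
        intro f hf
        refine ContinuousOn.intervalIntegrable ?_
        rw [uIcc_of_le zero_le_one]
        exact Complex.continuous_ofReal.comp_continuousOn
          (hf.mul (continuous_pow j).continuousOn)
      rw [e1, hu2 j hj, hu2' j hj, ← intervalIntegral.integral_ofReal,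
        ← intervalIntegral.integral_ofReal, ← intervalIntegral.integral_mul_const,
        ← intervalIntegral.integral_add
          (hfint (fun t => (blockDensity q m t).re) (Complex.continuous_re.comp_continuousOn hc))
          ((hfint (fun t => (blockDensity q m t).im)
            (Complex.continuous_im.comp_continuousOn hc)).mul_const I)]
      refine intervalIntegral.integral_congr fun t _ => ?_
      have := Complex.re_add_im (blockDensity q m t)
      rw [Complex.ofReal_mul, Complex.ofReal_mul, Complex.ofReal_pow]
      nth_rewrite 3 [← this]
      ring
  choose U hU1 hU2 using hU
  refine ⟨m₀, fun p => U (blockIndex p) p, fun p => hU1 _ p,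
    fun x hx => (hqs x hx).trans (by norm_num), fun m hm j hj => ?_⟩
  rw [← hU2 m hm j hj]
  refine Finset.sum_congr rfl fun p hp => ?_
  simp only [(mem_blockPrimes_iff_blockIndex (mem_blockPrimes.1 hp).1 m).1 hp]

/-- Prescribed cube roots of unity at the primes extend completely multiplicatively, with the value
`0` at `0`. -/
lemma exists_completelyMultiplicative (v : ℕ → ℂ) (hv : ∀ n, v n ^ 3 = 1) :
    ∃ χ : ℕ → ℂ, CompletelyMultiplicative χ ∧ (∀ n, 1 ≤ n → χ n ^ 3 = 1) ∧
      ∀ p, p.Prime → χ p = v p := by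
  refine ⟨fun n => if n = 0 then 0 else n.factorization.prod fun p k => v p ^ k,
    ⟨by simp, fun m n => ?_⟩, fun n hn => ?_, fun p hp => ?_⟩
  · by_cases hm : m = 0
    · simp [hm]
    by_cases hn : n = 0
    · simp [hn]
    simp only [hm, hn, mul_eq_zero, or_self, if_false]
    rw [Nat.factorization_mul hm hn]
    exact Finsupp.prod_add_index' (fun _ => pow_zero _) fun _ _ _ => pow_add _ _ _
  · simp only [show n ≠ 0 by omega, if_false]
    rw [Finsupp.prod, ← Finset.prod_pow]
    refine Finset.prod_eq_one fun p _ => ?_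
    rw [← pow_mul, mul_comm, pow_mul, hv, one_pow]
  · simp only [hp.ne_zero, if_false]
    rw [hp.factorization, Finsupp.prod_single_index (by simp), pow_one]

lemma mem_cube_roots {z : ℂ} (hz : z ^ 3 = 1) :
    z ∈ ({1, Complex.exp (2 * Real.pi * Complex.I / 3),
          Complex.exp (-(2 * Real.pi * Complex.I) / 3)} : Set ℂ) := by
  have h := Complex.isPrimitiveRoot_exp 3 (by norm_num)
  push_cast at h
  set ω := cexp (2 * Real.pi * Complex.I / 3) with hω
  have hinv : Complex.exp (-(2 * Real.pi * Complex.I) / 3) = ω⁻¹ := by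
    rw [neg_div, Complex.exp_neg]
  obtain ⟨i, hi, rfl⟩ := h.eq_pow_of_pow_eq_one hz
  rw [hinv]
  have hω2 : ω ^ 2 = ω⁻¹ := by
    refine eq_inv_of_mul_eq_one_left ?_
    rw [← pow_succ]; exact h.pow_eq_one
  interval_cases i
  · simp
  · simp
  · simp [hω2]

/-- The prime sum of the statement as a Dirichlet series over all integers. -/
lemma tsum_primes_eq_LSeries (a : ℕ → ℂ) (s : ℂ) :
    ∑' p : Nat.Primes, a p * (p : ℂ) ^ (-s) * (Real.log p : ℂ)
      = LSeries (fun n => a n * (primeLog n : ℂ)) s := by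
  refine (tsum_subtype {p : ℕ | p.Prime}
    fun n : ℕ => a n * (n : ℂ) ^ (-s) * (Real.log n : ℂ)).trans ?_
  rw [LSeries]
  refine tsum_congr fun n => ?_
  by_cases hn : n.Prime
  · rw [indicator_of_mem (by exact hn), LSeries.term_of_ne_zero hn.ne_zero, primeLog, if_pos hn,
      Complex.cpow_neg]
    ring
  · rw [indicator_of_notMem (by exact hn), LSeries.term_def, primeLog, if_neg hn]
    simp

/-- Absolutely convergent prime sums may be summed block by block. -/
lemma hasSum_blockPrimes (w : ℕ → ℂ) (hw : ∀ p, ‖w p‖ ≤ 1 / 2) {s : ℂ} (hs : 1 < s.re) :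
    HasSum (fun m => ∑ p ∈ blockPrimes m, w p * (p : ℂ) ^ (-s) * (Real.log p : ℂ))
      (LSeries (fun n => w n * (primeLog n : ℂ)) s) := by
  have hsum := lseriesSummable_primeLog w (fun n => (hw n).trans (by norm_num)) hs
  have h := hsum.hasSum.tsum_fiberwise blockIndex
  rw [LSeries]
  refine h.congr_fun fun m => ?_
  rw [tsum_subtype (blockIndex ⁻¹' {m}) (LSeries.term (fun n => w n * (primeLog n : ℂ)) s),
    tsum_eq_sum (s := blockPrimes m)]
  · refine Finset.sum_congr rfl fun p hp => ?_
    have hpp := (mem_blockPrimes.1 hp).1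
    have hpm : p ∈ blockIndex ⁻¹' {m} := (mem_blockPrimes_iff_blockIndex hpp m).1 hp
    rw [indicator_of_mem hpm,
      LSeries.term_of_ne_zero hpp.ne_zero, primeLog, if_pos hpp, Complex.cpow_neg]
    ring
  · intro n hn
    by_cases hpp : n.Prime
    · rw [indicator_of_notMem]
      exact fun h => hn ((mem_blockPrimes_iff_blockIndex hpp m).2 h)
    · rw [indicator_apply_eq_zero]
      intro _
      simp [LSeries.term_def, primeLog, hpp]

lemma hasSum_block_integrals {q : ℝ → ℂ} (hq : ContinuousOn q (Ici 1))
    (hq0 : Tendsto q atTop (nhds 0)) {s : ℂ} (hs : 1 < s.re) :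
    HasSum (fun m : ℕ => ∫ x in Ioc (Real.exp m) (Real.exp (m + 1)), q x * (x : ℂ) ^ (-s))
      (∫ x in Ioi (1 : ℝ), q x * (x : ℂ) ^ (-s)) := by
  have hun : ⋃ m : ℕ, Ioc (Real.exp m) (Real.exp (m + 1)) = Ioi (1 : ℝ) := by
    ext x
    simp only [mem_iUnion, mem_Ioc, mem_Ioi]
    constructor
    · rintro ⟨m, hm, -⟩
      exact lt_of_le_of_lt (Real.one_le_exp (Nat.cast_nonneg m)) hm
    · intro hx
      have hx0 : 0 < x := by linarith
      have hlog := Real.log_pos hx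
      have hc : 0 < ⌈Real.log x⌉₊ := Nat.ceil_pos.2 hlog
      have h1 := (Nat.ceil_eq_iff (a := Real.log x) (n := ⌈Real.log x⌉₊ - 1 + 1) (by omega)).1
        (by omega)
      refine ⟨⌈Real.log x⌉₊ - 1, ?_, ?_⟩
      · rw [← Real.lt_log_iff_exp_lt hx0]; simpa using h1.1
      · rw [← Real.log_le_iff_le_exp hx0]; exact_mod_cast h1.2
  rw [← hun]
  refine hasSum_integral_iUnion (fun m => measurableSet_Ioc) ?_ ?_
  · have hmono : Monotone fun m : ℕ => Real.exp m :=
      fun a b h => Real.exp_le_exp.2 (by exact_mod_cast h)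
    have := hmono.pairwise_disjoint_on_Ioc_succ
    simpa using this
  · rw [hun]
    have hcont : ContinuousOn (fun x : ℝ => q x * (x : ℂ) ^ (-s)) (Ici 1) := by
      refine hq.mul fun x hx => ContinuousAt.continuousWithinAt ?_
      exact continuousAt_ofReal_cpow_const _ _ (Or.inr (lt_of_lt_of_le zero_lt_one hx).ne')
    refine ((hcont.locallyIntegrableOn measurableSet_Ici).integrableOn_of_isBigO_atTop
      (g := fun x : ℝ => x ^ (-s.re)) ?_ ?_).mono_set Ioi_subset_Ici_self
    · have h1 : q =O[atTop] fun _ => (1 : ℝ) := hq0.isBigO_one ℝ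
      have h2 : (fun x : ℝ => (x : ℂ) ^ (-s)) =O[atTop] fun x : ℝ => x ^ (-s.re) := by
        refine Asymptotics.IsBigO.of_bound 1 ?_
        filter_upwards [eventually_gt_atTop 0] with x hx
        rw [Complex.norm_cpow_eq_rpow_re_of_pos hx, one_mul, Complex.neg_re,
          Real.norm_of_nonneg (by positivity)]
      simpa using h1.mul h2
    · exact ⟨Ioi 1, Ioi_mem_atTop 1, integrableOn_Ioi_rpow_of_lt (by linarith) zero_lt_one⟩

end CubicExt


open CubicExt in
theorem mellin_minus_prime_sum_extends_cubic
    (q : ℝ → ℂ) (hq : ContinuousOn q (Set.Ici 1))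
    (hq0 : Tendsto q atTop (nhds 0)) :
    ∃ χ : ℕ → ℂ,
      CompletelyMultiplicative χ ∧
      (∀ n : ℕ, 1 ≤ n → χ n ∈ ({1, Complex.exp (2 * Real.pi * Complex.I / 3),
          Complex.exp (-(2 * Real.pi * Complex.I) / 3)} : Set ℂ)) ∧
      ∃ G : ℂ → ℂ, AnalyticOnNhd ℂ G {s : ℂ | 21 / 40 < s.re} ∧
        ∀ s : ℂ, 1 < s.re →
          G s = (∫ x in Set.Ioi (1 : ℝ), q x * (x : ℂ) ^ (-s)) -
            ∑' p : Nat.Primes, χ p * (p : ℂ) ^ (-s) * (Real.log p : ℂ) := by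
  obtain ⟨m₀, w, hw, hqb, hmom⟩ := exists_coefficients hq hq0
  obtain ⟨v, hv, H, hH, hHeq⟩ := exists_rounded_extension w hw
  obtain ⟨χ, hχ, hχ3, hχp⟩ := exists_completelyMultiplicative v hv
  refine ⟨χ, hχ, fun n hn => mem_cube_roots (hχ3 n hn),
    fun s => ∑ m ∈ Finset.range m₀, blockDiff q w m s + ∑' i, blockDiff q w (i + m₀) s - H s,
    ?_, fun s hs => ?_⟩
  · refine DifferentiableOn.analyticOnNhd ?_ (isOpen_lt continuous_const Complex.continuous_re)
    refine DifferentiableOn.sub (DifferentiableOn.add ?_ ?_) (hH.mono fun s hs => ?_)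
    · exact (Differentiable.fun_sum fun m _ => differentiable_blockDiff hq w m).differentiableOn
    · exact (differentiable_tsum_blockDiff hq hw hqb hmom).differentiableOn
    · have : 21 / 40 < s.re := hs
      show 13 / 25 < s.re
      linarith
  · have hsum : HasSum (fun m => blockDiff q w m s)
        ((∫ x in Ioi (1 : ℝ), q x * (x : ℂ) ^ (-s))
          - LSeries (fun n => w n * (primeLog n : ℂ)) s) :=
      (hasSum_block_integrals hq hq0 hs).sub (hasSum_blockPrimes w hw hs)
    have hv1 : ∀ n, ‖v n‖ ≤ 2 := by
      intro n
      have := congrArg norm (hv n)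
      rw [norm_pow, norm_one] at this
      rw [(pow_eq_one_iff_of_nonneg (norm_nonneg _) (by norm_num)).1 this]
      norm_num
    have hprime : ∑' p : Nat.Primes, χ p * (p : ℂ) ^ (-s) * (Real.log p : ℂ)
        = LSeries (fun n => v n * (primeLog n : ℂ)) s := by
      rw [← tsum_primes_eq_LSeries]
      exact tsum_congr fun p => by rw [hχp p p.2]
    have hdiff : H s = LSeries (fun n => v n * (primeLog n : ℂ)) s
        - LSeries (fun n => w n * (primeLog n : ℂ)) s := by
      rw [← hHeq s hs, ← LSeries_sub (lseriesSummable_primeLog v hv1 hs)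
        (lseriesSummable_primeLog w (fun n => (hw n).trans (by norm_num)) hs)]
      congr 1
      ext n
      simp [sub_mul]
    simp only []
    rw [hsum.summable.sum_add_tsum_nat_add m₀, hsum.tsum_eq, hprime, hdiff]
    ring
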